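/- arXiv:2105.15081 — 2 statements merged into one kernel-verified Lean document; each statement's English description precedes it below -/
import Mathlib

section
/- Consider the detection problem: under 𝒬, Ỹ ∈ ℝ^{N×n} has i.i.d. N(0, 1/N) entries; under 𝒫, draw v ∼ BR(N,ρ) and a uniformly random orthogonal Q ∈ ℝ^{n×n}, let Y have first column v and remaining columns i.i.d. N(0, (1/N) I_N), and observe Ỹ = YQ. Define the degree-D advantage Adv_{≤D} := sup over nonzero real polynomials f of degree at most D in the Nn entries of Ỹ of 𝔼_𝒫[f(Ỹ)] / √(𝔼_𝒬[f(Ỹ)²]). For any constant C₁ > 0 there exists a constant C₂ = C₂(C₁) > 0 such that: if nρ ≥ √N·(log N)^{C₂} and D ≤ (log N)^{C₁}, then Adv_{≤D} ≤ 2. -/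
open MeasureTheory ProbabilityTheory Matrix

/-- Euclidean norm of a vector in `ℝ^k`. -/
noncomputable def eucNorm {k : ℕ} (v : Fin k → ℝ) : ℝ := Real.sqrt (∑ i, (v i) ^ 2)

/-- ℓ_p norm of a vector in `ℝ^k`. -/
noncomputable def lpNorm {k : ℕ} (p : ℝ) (v : Fin k → ℝ) : ℝ := (∑ i, |v i| ^ p) ^ (1 / p)

/-- Supremum (ℓ_∞) norm of a vector in `ℝ^k`. -/
noncomputable def supNorm {k : ℕ} (v : Fin k → ℝ) : ℝ := ⨆ i, |v i|

/-- The Gaussian measure `N(0, σ2 · I_k)` on `ℝ^k`. -/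
noncomputable def gaussVec (k : ℕ) (σ2 : NNReal) : Measure (Fin k → ℝ) :=
  Measure.pi fun _ => gaussianReal 0 σ2

instance (k : ℕ) (σ2 : NNReal) : IsProbabilityMeasure (gaussVec k σ2) := by
  unfold gaussVec; infer_instance

/-- The law of `N` i.i.d. samples from `N(0, σ2 · I_k)`. -/
noncomputable def iidGaussVec (N k : ℕ) (σ2 : NNReal) : Measure (Fin N → Fin k → ℝ) :=
  Measure.pi fun _ => gaussVec k σ2

/-- Concatenation `(a, bᵀ)ᵀ ∈ ℝ^n` of a scalar `a` with a vector `b ∈ ℝ^{n-1}`. -/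
noncomputable def rowCat {n : ℕ} (a : ℝ) (b : Fin (n - 1) → ℝ) : Fin n → ℝ :=
  fun j => if h : (j : ℕ) = 0 then a else b ⟨(j : ℕ) - 1, by have := j.isLt; omega⟩

/-- The `N × n` matrix whose rows are `y_iᵀ = (v_i, b_iᵀ)`, i.e. whose first column is `v`
and whose remaining `n - 1` columns are given by `B`. -/
noncomputable def gaussBasis {N n : ℕ} (v : Fin N → ℝ) (B : Fin N → Fin (n - 1) → ℝ) :
    Matrix (Fin N) (Fin n) ℝ :=
  Matrix.of fun i => rowCat (v i) (B i)

/-- The matrix `M(Y) = ∑_i (‖y_i‖² - (n-1)/N) y_i y_iᵀ - (3/N) I_n` built from the rows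
`y_iᵀ` of `Y`. -/
noncomputable def specMat {N n : ℕ} (Y : Matrix (Fin N) (Fin n) ℝ) :
    Matrix (Fin n) (Fin n) ℝ :=
  (∑ i, ((∑ j, (Y i j) ^ 2) - ((n : ℝ) - 1) / N) • Matrix.vecMulVec (Y i) (Y i))
    - ((3 : ℝ) / N) • (1 : Matrix (Fin n) (Fin n) ℝ)

/-- `u` is a unit leading eigenvector of the (symmetric) matrix `M`: a unit eigenvector
whose eigenvalue has the largest absolute value among all eigenvalues of `M`. -/
def IsLeadingEigen {n : ℕ} (M : Matrix (Fin n) (Fin n) ℝ) (u : Fin n → ℝ) : Prop :=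
  eucNorm u = 1 ∧ ∃ μ : ℝ, M.mulVec u = μ • u ∧
    ∀ μ' : ℝ, (∃ w : Fin n → ℝ, w ≠ 0 ∧ M.mulVec w = μ' • w) → |μ'| ≤ |μ|

/-- The quantity `η = η(N, n, v, δ)` with universal constant `C`. -/
noncomputable def etaBound (C : ℝ) (N n : ℕ) (v : Fin N → ℝ) (δ : ℝ) : ℝ :=
  C * ((eucNorm v + 1) * n * Real.sqrt (Real.log (N / δ)) / (N : ℝ) ^ ((3 : ℝ) / 2)
    + lpNorm 4 v ^ 2 * Real.sqrt (n * Real.log (N / δ)) / N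
    + lpNorm 6 v ^ 3 * (Real.sqrt n + Real.sqrt (Real.log (N / δ))) / Real.sqrt N
    + supNorm v ^ 2 * (n * Real.log (N / δ) + (Real.log (N / δ)) ^ 2) / N
    + (n * Real.log (N / δ)) ^ ((3 : ℝ) / 2) / (N : ℝ) ^ 2
    + |eucNorm v ^ 2 - 1| / N)

/-- The Bernoulli–Rademacher distribution on `ℝ`: `0` w.p. `1-ρ`, `±1/√(Nρ)` w.p. `ρ/2` each. -/
noncomputable def brMeasure (N : ℕ) (ρ : ℝ) : Measure ℝ :=
  (Real.toNNReal (1 - ρ)) • Measure.dirac 0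
    + (Real.toNNReal (ρ / 2)) • Measure.dirac (Real.sqrt (N * ρ))⁻¹
    + (Real.toNNReal (ρ / 2)) • Measure.dirac (-(Real.sqrt (N * ρ))⁻¹)

instance (N : ℕ) (ρ : ℝ) : IsFiniteMeasure (brMeasure N ρ) := by
  unfold brMeasure; infer_instance

/-- The law of a Bernoulli–Rademacher vector `v ∼ BR(N, ρ)` with i.i.d. entries. -/
noncomputable def brVec (N : ℕ) (ρ : ℝ) : Measure (Fin N → ℝ) :=
  Measure.pi fun _ => brMeasure N ρ

instance (N : ℕ) (ρ : ℝ) : IsFiniteMeasure (brVec N ρ) := by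
  unfold brVec; infer_instance

open scoped NNReal

lemma integrable_pow_gaussianReal (s : ℝ≥0) (k : ℕ) :
    Integrable (fun x : ℝ => x ^ k) (gaussianReal 0 s) := by
  have h := (memLp_id_gaussianReal (μ := 0) (v := s) (k : ℝ≥0)).integrable_norm_pow'
  refine (integrable_norm_iff (by fun_prop)).1 ?_
  simpa using h

/-- Gaussian integration by parts for monomials. -/
lemma integral_pow_succ_gaussianReal (s : ℝ≥0) (k : ℕ) :
    ∫ x, x ^ (k + 1) ∂(gaussianReal 0 s) = s * (k * ∫ x, x ^ (k - 1) ∂(gaussianReal 0 s)) := by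
  rcases eq_or_ne s 0 with rfl | hs
  · simp
  have hs' : (s : ℝ) ≠ 0 := by exact_mod_cast hs
  have h_integrable : ∀ m : ℕ, Integrable (fun x : ℝ => x ^ m * gaussianPDFReal 0 s x) := by
    intro m
    have h := integrable_pow_gaussianReal s m
    rw [gaussianReal_of_var_ne_zero _ hs, integrable_withDensity_iff_integrable_smul₀'
      (by fun_prop) (by simp [gaussianPDF])] at h
    refine h.congr (Filter.Eventually.of_forall fun x => ?_)
    simp [gaussianPDF, ENNReal.toReal_ofReal (gaussianPDFReal_nonneg 0 s x), mul_comm]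
  have hd : ∀ x : ℝ, HasDerivAt (gaussianPDFReal 0 s) (-(x / s) * gaussianPDFReal 0 s x) x := by
    intro x
    unfold gaussianPDFReal
    have h1 : HasDerivAt (fun x : ℝ => -(x - 0) ^ 2 / (2 * s)) (-(x / s)) x := by
      have := (((hasDerivAt_id x).sub_const 0).pow 2).neg.div_const (2 * (s : ℝ))
      convert! this using 1
      simp; field_simp
    convert! (h1.exp.const_mul (√(2 * Real.pi * s))⁻¹) using 1
    ring
  have key := integral_mul_deriv_eq_deriv_mul_of_integrable
    (u := fun x : ℝ => x ^ k) (u' := fun x => k * x ^ (k - 1)) (v := gaussianPDFReal 0 s)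
    (v' := fun x => -(x / s) * gaussianPDFReal 0 s x)
    (fun x _ => hasDerivAt_pow k x) (fun x _ => hd x)
    (((h_integrable (k + 1)).const_mul (-(1 / (s : ℝ)))).congr (Filter.Eventually.of_forall fun x => by
      simp; ring))
    (((h_integrable (k - 1)).const_mul (k : ℝ)).congr (Filter.Eventually.of_forall fun x => by
      simp; ring))
    (h_integrable k)
  rw [integral_gaussianReal_eq_integral_smul hs, integral_gaussianReal_eq_integral_smul hs]
  have e1 : ∀ x : ℝ, x ^ k * (-(x / s) * gaussianPDFReal 0 s x)
      = -(1 / (s : ℝ)) * (gaussianPDFReal 0 s x • x ^ (k + 1)) := fun x => by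
    simp only [smul_eq_mul]; ring
  have e2 : ∀ x : ℝ, (k * x ^ (k - 1)) * gaussianPDFReal 0 s x
      = k * (gaussianPDFReal 0 s x • x ^ (k - 1)) := fun x => by
    simp only [smul_eq_mul]; ring
  simp_rw [e1, e2, integral_const_mul] at key
  field_simp at key
  linarith

/-- The Gaussian product measure is invariant under orthogonal maps. -/
lemma measurePreserving_vecMul_gaussianReal {n : ℕ} (s : ℝ≥0) (Q : Matrix (Fin n) (Fin n) ℝ)
    (hQ : Q * Qᵀ = 1) :
    MeasurePreserving (fun y : Fin n → ℝ => y ᵥ* Q)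
      (Measure.pi fun _ => gaussianReal 0 s) (Measure.pi fun _ => gaussianReal 0 s) := by
  have hcf : ∀ L : StrongDual ℝ (Fin n → ℝ),
      charFunDual (Measure.pi fun _ : Fin n => gaussianReal 0 s) L
        = Complex.exp (-(s * ((∑ j, (L (Pi.single j 1)) ^ 2 : ℝ) : ℂ)) / 2) := by
    intro L
    have hL : ∀ x : Fin n → ℝ, L x = ∑ j, x j * L (Pi.single j 1) := by
      intro x
      conv_lhs => rw [pi_eq_sum_univ' x]
      simp
    rw [charFunDual_apply]
    have : ∀ x : Fin n → ℝ, Complex.exp ((L x : ℂ) * Complex.I)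
        = ∏ j, Complex.exp ((L (Pi.single j 1) : ℂ) * x j * Complex.I) := by
      intro x
      rw [hL x, ← Complex.exp_sum]
      push_cast
      rw [Finset.sum_mul]
      simp only [mul_comm]
    simp_rw [this]
    rw [integral_fintype_prod_eq_prod
      (f := fun j (t : ℝ) => Complex.exp ((L (Pi.single j 1) : ℂ) * t * Complex.I))]
    simp_rw [← charFun_apply_real, charFun_gaussianReal, ← Complex.exp_sum]
    congr 1
    push_cast
    rw [Finset.mul_sum, ← Finset.sum_neg_distrib, Finset.sum_div]
    refine Finset.sum_congr rfl fun j _ => ?_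
    simp
    ring
  let T : (Fin n → ℝ) →L[ℝ] (Fin n → ℝ) := (Matrix.vecMulLinear Q).toContinuousLinearMap
  have hT : ⇑T = fun y : Fin n → ℝ => y ᵥ* Q := by ext; rfl
  refine ⟨by rw [← hT]; fun_prop, ?_⟩
  apply Measure.ext_of_charFunDual
  ext L
  rw [← hT, charFunDual_map, hcf, hcf]
  congr 4
  have hL : ∀ j, (L.comp T) (Pi.single j 1) = ∑ k, Q j k * L (Pi.single k 1) := by
    intro j
    simp only [ContinuousLinearMap.comp_apply, hT]
    rw [Matrix.single_one_vecMul, pi_eq_sum_univ' (Q.row j)]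
    simp
  simp_rw [hL]
  have h2 : ∀ k l, ∑ j, Q j k * Q j l = (1 : Matrix (Fin n) (Fin n) ℝ) k l := by
    intro k l
    rw [← mul_eq_one_comm.1 hQ]
    simp [Matrix.mul_apply]
  norm_cast
  calc ∑ j, (∑ k, Q j k * L (Pi.single k 1)) ^ 2
      = ∑ j, ∑ k, ∑ l, Q j k * Q j l * (L (Pi.single k 1) * L (Pi.single l 1)) := by
        refine Finset.sum_congr rfl fun j _ => ?_
        rw [sq, Finset.sum_mul_sum]
        refine Finset.sum_congr rfl fun k _ => Finset.sum_congr rfl fun l _ => by ring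
    _ = ∑ k, ∑ l, (∑ j, Q j k * Q j l) * (L (Pi.single k 1) * L (Pi.single l 1)) := by
        rw [Finset.sum_comm]
        refine Finset.sum_congr rfl fun k _ => ?_
        rw [Finset.sum_comm]
        simp_rw [Finset.sum_mul]
    _ = ∑ j, L (Pi.single j 1) ^ 2 := by
        simp [h2, Matrix.one_apply, sq]

lemma integrable_eval_pi {ι : Type*} [Fintype ι] (μ : Measure ℝ) [SigmaFinite μ]
    (hμ : ∀ k : ℕ, Integrable (fun x : ℝ => x ^ k) μ) (p : MvPolynomial ι ℝ) :
    Integrable (fun y => MvPolynomial.eval y p) (Measure.pi fun _ : ι => μ) := by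
  simp_rw [MvPolynomial.eval_eq']
  exact integrable_finsetSum _ fun d _ =>
    (Integrable.fintype_prod (f := fun i (x : ℝ) => x ^ d i) fun i => hμ _).const_mul _

/-- Gaussian integration by parts for polynomials in several variables. -/
lemma integral_X_mul_gaussian {n : ℕ} (s : ℝ≥0) (j : Fin n) (p : MvPolynomial (Fin n) ℝ) :
    ∫ y, MvPolynomial.eval y (MvPolynomial.X j * p) ∂(Measure.pi fun _ => gaussianReal 0 s)
      = s * ∫ y, MvPolynomial.eval y (MvPolynomial.pderiv j p)
          ∂(Measure.pi fun _ => gaussianReal 0 s) := by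
  have hi := fun p : MvPolynomial (Fin n) ℝ =>
    integrable_eval_pi (gaussianReal 0 s) (integrable_pow_gaussianReal s) p
  induction p using MvPolynomial.induction_on' with
  | add p q hp hq =>
    simp only [mul_add, map_add] at *
    rw [integral_add (hi _) (hi _), integral_add (hi _) (hi _), hp, hq, mul_add]
  | monomial m a =>
    have hmon : ∀ (m : Fin n →₀ ℕ) (a : ℝ), ∫ y, MvPolynomial.eval y (MvPolynomial.monomial m a)
        ∂(Measure.pi fun _ => gaussianReal 0 s) = a * ∏ i, ∫ x, x ^ m i ∂(gaussianReal 0 s) := by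
      intro m a
      simp_rw [MvPolynomial.eval_monomial, integral_const_mul, Finsupp.prod_pow]
      rw [integral_fintype_prod_eq_prod (f := fun i (x : ℝ) => x ^ m i)]
    rw [MvPolynomial.pderiv_monomial, MvPolynomial.X, MvPolynomial.monomial_mul, hmon, hmon,
      ← Finset.mul_prod_erase _ _ (Finset.mem_univ j),
      ← Finset.mul_prod_erase _ _ (Finset.mem_univ j)]
    have h1 : (fun₀ | j => 1) + m = m + (fun₀ | j => 1) := add_comm _ _
    have h2 : ∏ i ∈ Finset.univ.erase j, ∫ x : ℝ, x ^ (((fun₀ | j => 1) + m) i) ∂(gaussianReal 0 s)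
        = ∏ i ∈ Finset.univ.erase j, ∫ x, x ^ ((m - (fun₀ | j => 1)) i) ∂(gaussianReal 0 s) := by
      refine Finset.prod_congr rfl fun i hi => ?_
      have hij : j ≠ i := fun h => (Finset.ne_of_mem_erase hi) h.symm
      simp [hij]
    rw [h2, h1]
    simp only [Finsupp.add_apply, Finsupp.tsub_apply, Finsupp.single_eq_same,
      integral_pow_succ_gaussianReal]
    ring

/-- Monic Hermite polynomials of variance `s`. -/
noncomputable def hermiteVar (s : ℝ) : ℕ → Polynomial ℝ
  | 0 => 1
  | 1 => Polynomial.X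
  | k + 2 => Polynomial.X * hermiteVar s (k + 1) - Polynomial.C (s * (k + 1)) * hermiteVar s k

open Polynomial in
lemma X_mul_hermiteVar (s : ℝ) (k : ℕ) :
    X * hermiteVar s k = hermiteVar s (k + 1) + C (s * k) * hermiteVar s (k - 1) := by
  cases k with
  | zero => simp [hermiteVar]
  | succ k => simp [hermiteVar]

open Polynomial in
lemma derivative_hermiteVar (s : ℝ) (k : ℕ) :
    derivative (hermiteVar s k) = C (k : ℝ) * hermiteVar s (k - 1) := by
  induction k using Nat.strong_induction_on with
  | _ k ih =>
    match k with
    | 0 => simp [hermiteVar]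
    | 1 => simp [hermiteVar]
    | k + 2 =>
      have h1 := ih (k + 1) (by omega)
      have h0 := ih k (by omega)
      have h2 := X_mul_hermiteVar s k
      simp only [hermiteVar, derivative_sub, derivative_mul, derivative_X, derivative_C, h1, h0,
        Nat.add_sub_cancel, Nat.add_succ_sub_one] at *
      push_cast at *
      simp only [map_mul, map_add, map_natCast, map_one, map_ofNat] at *
      linear_combination ((k : ℝ[X]) + 1) * h2

lemma abs_eval_hermiteVar_le {s x y : ℝ} (hs : 0 ≤ s) (hx : 0 ≤ x) (hsx : s ≤ x ^ 2)
    (hy : |y| ≤ x) (k : ℕ) : |(hermiteVar s k).eval y| ≤ k.factorial * x ^ k := by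
  induction k using Nat.strong_induction_on with
  | _ k ih =>
    match k with
    | 0 => simp [hermiteVar]
    | 1 => simpa [hermiteVar] using hy
    | k + 2 =>
      have h1 := ih (k + 1) (by omega)
      have h0 := ih k (by omega)
      simp only [hermiteVar, Polynomial.eval_sub, Polynomial.eval_mul, Polynomial.eval_X,
        Polynomial.eval_C]
      calc _ ≤ |y * (hermiteVar s (k + 1)).eval y| + |s * (k + 1) * (hermiteVar s k).eval y| :=
            abs_sub _ _
        _ ≤ x * ((k + 1).factorial * x ^ (k + 1)) + x ^ 2 * (k + 1) * (k.factorial * x ^ k) := by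
            rw [abs_mul, abs_mul, abs_of_nonneg (by positivity : 0 ≤ s * (k + 1))]
            gcongr
        _ = 2 * ((k + 1).factorial * x ^ (k + 2)) := by
            rw [Nat.factorial_succ]; push_cast; ring
        _ ≤ (k + 2) * ((k + 1).factorial * x ^ (k + 2)) := by
            gcongr; linarith [(Nat.cast_nonneg k : (0 : ℝ) ≤ k)]
        _ = _ := by rw [Nat.factorial_succ (k + 1)]; push_cast; ring

/-- The linear form `x ↦ u ⬝ᵥ x` as a polynomial. -/
noncomputable def linForm {n : ℕ} (u : Fin n → ℝ) : MvPolynomial (Fin n) ℝ :=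
  ∑ j, MvPolynomial.C (u j) * MvPolynomial.X j

lemma eval_linForm {n : ℕ} (u y : Fin n → ℝ) : MvPolynomial.eval y (linForm u) = u ⬝ᵥ y := by
  simp [linForm, dotProduct]

lemma eval_aeval_linForm {n : ℕ} (u y : Fin n → ℝ) (p : Polynomial ℝ) :
    MvPolynomial.eval y (Polynomial.aeval (linForm u) p) = p.eval (u ⬝ᵥ y) := by
  rw [← eval_linForm]
  induction p using Polynomial.induction_on' <;> simp_all

lemma integrable_eval_dotProduct {n : ℕ} (s : ℝ≥0) (u w : Fin n → ℝ) (p q : Polynomial ℝ) :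
    Integrable (fun y => p.eval (u ⬝ᵥ y) * q.eval (w ⬝ᵥ y))
      (Measure.pi fun _ => gaussianReal 0 s) := by
  have := integrable_eval_pi (gaussianReal 0 s) (integrable_pow_gaussianReal s)
    (Polynomial.aeval (linForm u) p * Polynomial.aeval (linForm w) q)
  simpa only [map_mul, eval_aeval_linForm] using this

lemma integral_dotProduct_mul {n : ℕ} (s : ℝ≥0) (u w : Fin n → ℝ) (p q : Polynomial ℝ) :
    ∫ y, (u ⬝ᵥ y) * (p.eval (u ⬝ᵥ y) * q.eval (w ⬝ᵥ y)) ∂(Measure.pi fun _ => gaussianReal 0 s)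
      = s * ((u ⬝ᵥ u) * ∫ y, p.derivative.eval (u ⬝ᵥ y) * q.eval (w ⬝ᵥ y)
            ∂(Measure.pi fun _ => gaussianReal 0 s)
          + (u ⬝ᵥ w) * ∫ y, p.eval (u ⬝ᵥ y) * q.derivative.eval (w ⬝ᵥ y)
            ∂(Measure.pi fun _ => gaussianReal 0 s)) := by
  have hi := fun p : MvPolynomial (Fin n) ℝ =>
    integrable_eval_pi (gaussianReal 0 s) (integrable_pow_gaussianReal s) p
  set G := Polynomial.aeval (linForm u) p * Polynomial.aeval (linForm w) q with hG
  have h1 : ∀ y, (u ⬝ᵥ y) * (p.eval (u ⬝ᵥ y) * q.eval (w ⬝ᵥ y))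
      = ∑ j, u j * MvPolynomial.eval y (MvPolynomial.X j * G) := by
    intro y
    simp only [hG, map_mul, eval_aeval_linForm, MvPolynomial.eval_X]
    generalize p.eval (u ⬝ᵥ y) = a
    generalize q.eval (w ⬝ᵥ y) = b
    rw [dotProduct, Finset.sum_mul]
    exact Finset.sum_congr rfl fun j _ => by ring
  have hl : ∀ (v : Fin n → ℝ) j, MvPolynomial.pderiv j (linForm v) = MvPolynomial.C (v j) := by
    intro v j
    simp [linForm, MvPolynomial.pderiv_X, Pi.single_apply]
  have h2 : ∀ j y, MvPolynomial.eval y (MvPolynomial.pderiv j G)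
      = u j * (p.derivative.eval (u ⬝ᵥ y) * q.eval (w ⬝ᵥ y))
        + w j * (p.eval (u ⬝ᵥ y) * q.derivative.eval (w ⬝ᵥ y)) := by
    intro j y
    simp only [hG, MvPolynomial.pderiv_mul, Derivation.map_aeval, hl, map_add, map_mul, smul_eq_mul,
      eval_aeval_linForm, MvPolynomial.eval_C]
    ring
  simp_rw [h1]
  rw [integral_finsetSum _ fun j _ => (hi _).const_mul _]
  simp_rw [integral_const_mul, integral_X_mul_gaussian, h2]
  have h3 : ∀ j, ∫ y, u j * (p.derivative.eval (u ⬝ᵥ y) * q.eval (w ⬝ᵥ y))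
        + w j * (p.eval (u ⬝ᵥ y) * q.derivative.eval (w ⬝ᵥ y))
        ∂(Measure.pi fun _ => gaussianReal 0 s)
      = u j * (∫ y, (p.derivative.eval (u ⬝ᵥ y) * q.eval (w ⬝ᵥ y))
        ∂(Measure.pi fun _ => gaussianReal 0 s))
        + w j * ∫ y, (p.eval (u ⬝ᵥ y) * q.derivative.eval (w ⬝ᵥ y))
        ∂(Measure.pi fun _ => gaussianReal 0 s) := by
    intro j
    rw [integral_add ((integrable_eval_dotProduct s u w _ _).const_mul _)
      ((integrable_eval_dotProduct s u w _ _).const_mul _), integral_const_mul, integral_const_mul]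
  simp_rw [h3]
  simp only [dotProduct, Finset.sum_mul, Finset.mul_sum, ← Finset.sum_add_distrib]
  exact Finset.sum_congr rfl fun j _ => by ring

lemma integral_hermiteVar_succ_mul {n : ℕ} (s : ℝ≥0) (u w : Fin n → ℝ) (hu : u ⬝ᵥ u = 1) (k : ℕ)
    (q : Polynomial ℝ) :
    ∫ y, (hermiteVar s (k + 1)).eval (u ⬝ᵥ y) * q.eval (w ⬝ᵥ y)
        ∂(Measure.pi fun _ => gaussianReal 0 s)
      = s * (u ⬝ᵥ w) * ∫ y, (hermiteVar s k).eval (u ⬝ᵥ y) * q.derivative.eval (w ⬝ᵥ y)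
            ∂(Measure.pi fun _ => gaussianReal 0 s) := by
  have h := integral_dotProduct_mul s u w (hermiteVar s k) q
  have e : hermiteVar s (k + 1) = Polynomial.X * hermiteVar s k
      - Polynomial.C (s : ℝ) * Polynomial.derivative (hermiteVar s k) := by
    rw [X_mul_hermiteVar, derivative_hermiteVar, ← mul_assoc, ← Polynomial.C_mul]; ring
  have e1 : ∀ y : Fin n → ℝ, (hermiteVar s (k + 1)).eval (u ⬝ᵥ y) * q.eval (w ⬝ᵥ y)
      = (u ⬝ᵥ y) * ((hermiteVar s k).eval (u ⬝ᵥ y) * q.eval (w ⬝ᵥ y))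
        - s * ((hermiteVar s k).derivative.eval (u ⬝ᵥ y) * q.eval (w ⬝ᵥ y)) := by
    intro y; rw [e]; simp; ring
  simp_rw [e1]
  have hi : Integrable (fun y => (u ⬝ᵥ y) * ((hermiteVar s k).eval (u ⬝ᵥ y) * q.eval (w ⬝ᵥ y)))
      (Measure.pi fun _ => gaussianReal 0 s) := by
    refine (integrable_eval_dotProduct s u w (Polynomial.X * hermiteVar s k) q).congr
      (Filter.Eventually.of_forall fun y => ?_)
    simp; ring
  rw [integral_sub hi ((integrable_eval_dotProduct s u w _ _).const_mul _), integral_const_mul, h,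
    hu]
  ring

/-- Correlation of Hermite polynomials along two unit directions. -/
lemma integral_hermiteVar_mul_hermiteVar {n : ℕ} (s : ℝ≥0) (u w : Fin n → ℝ) (hu : u ⬝ᵥ u = 1)
    (hw : w ⬝ᵥ w = 1) (j k : ℕ) :
    ∫ y, (hermiteVar s j).eval (u ⬝ᵥ y) * (hermiteVar s k).eval (w ⬝ᵥ y)
        ∂(Measure.pi fun _ => gaussianReal 0 s)
      = if j = k then k.factorial * (s : ℝ) ^ k * (u ⬝ᵥ w) ^ k else 0 := by
  induction j generalizing k with
  | zero =>
    cases k with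
    | zero => simp [hermiteVar]
    | succ k =>
      have := integral_hermiteVar_succ_mul s w u hw k (hermiteVar s 0)
      simp only [derivative_hermiteVar] at this
      simp only [mul_comm] at this ⊢
      simpa using this
  | succ j ih =>
    rw [integral_hermiteVar_succ_mul s u w hu]
    simp only [derivative_hermiteVar, Polynomial.eval_mul, Polynomial.eval_C, mul_left_comm,
      integral_const_mul]
    rw [ih]
    cases k with
    | zero => simp
    | succ k =>
      simp only [Nat.add_sub_cancel, Nat.add_right_cancel_iff, Nat.factorial_succ]
      split_ifs
      · push_cast; ring
      · simp

lemma integrable_eval_polynomial {μ : Measure ℝ} (hμ : ∀ k : ℕ, Integrable (fun x : ℝ => x ^ k) μ)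
    (p : Polynomial ℝ) : Integrable (fun x => p.eval x) μ := by
  simp_rw [Polynomial.eval_eq_sum_range]
  exact integrable_finsetSum _ fun k _ => (hμ k).const_mul _

lemma integral_hermiteVar_mul_hermiteVar_gaussianReal (s : ℝ≥0) (j k : ℕ) :
    ∫ x, (hermiteVar s j).eval x * (hermiteVar s k).eval x ∂(gaussianReal 0 s)
      = if j = k then k.factorial * (s : ℝ) ^ k else 0 := by
  have h := integral_hermiteVar_mul_hermiteVar (n := 1) s (fun _ => 1) (fun _ => 1)
    (by simp [dotProduct]) (by simp [dotProduct]) j k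
  have h2 := integral_fintype_prod_eq_prod (ι := Fin 1) (μ := fun _ => gaussianReal 0 s)
    (f := fun _ (x : ℝ) => (hermiteVar s j).eval x * (hermiteVar s k).eval x)
  simp only [dotProduct, Finset.univ_unique, Finset.sum_singleton, one_mul,
    Finset.prod_singleton, one_pow, mul_one] at h h2
  rw [← h2, h]

lemma eval_pow_succ_mul_hermiteVar (s : ℝ) (m j : ℕ) (x : ℝ) :
    x ^ (m + 1) * (hermiteVar s j).eval x = x ^ m * (hermiteVar s (j + 1)).eval x
      + s * j * (x ^ m * (hermiteVar s (j - 1)).eval x) := by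
  have := congrArg (Polynomial.eval x) (X_mul_hermiteVar s j)
  simp only [Polynomial.eval_mul, Polynomial.eval_X, Polynomial.eval_add, Polynomial.eval_C] at this
  linear_combination x ^ m * this

lemma integral_pow_succ_mul_hermiteVar {μ : Measure ℝ}
    (hμ : ∀ k : ℕ, Integrable (fun x : ℝ => x ^ k) μ) (s : ℝ) (m j : ℕ) (q : Polynomial ℝ) :
    ∫ x, x ^ (m + 1) * (hermiteVar s j).eval x * q.eval x ∂μ
      = ∫ x, x ^ m * (hermiteVar s (j + 1)).eval x * q.eval x ∂μ
      + s * j * ∫ x, x ^ m * (hermiteVar s (j - 1)).eval x * q.eval x ∂μ := by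
  have hi : ∀ j, Integrable (fun x => x ^ m * (hermiteVar s j).eval x * q.eval x) μ := fun j => by
    exact (integrable_eval_polynomial hμ (Polynomial.X ^ m * hermiteVar s j * q)).congr
      (.of_forall fun x => by simp)
  simp_rw [eval_pow_succ_mul_hermiteVar, add_mul]
  simp only [mul_assoc _ (_ * _) _] at *
  rw [← integral_const_mul, ← integral_add (hi _) ((hi _).const_mul _)]

lemma integral_pow_mul_hermiteVar_eq_zero (s : ℝ≥0) (m : ℕ) :
    ∀ j k : ℕ, m + j < k → ∫ x, x ^ m * (hermiteVar s j).eval x * (hermiteVar s k).eval x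
      ∂(gaussianReal 0 s) = 0 := by
  induction m with
  | zero =>
    intro j k h
    simp only [pow_zero, one_mul, integral_hermiteVar_mul_hermiteVar_gaussianReal]
    rw [if_neg (by omega)]
  | succ m ih =>
    intro j k h
    rw [integral_pow_succ_mul_hermiteVar (integrable_pow_gaussianReal s), ih _ _ (by omega),
      ih _ _ (by omega)]
    simp

/-- Normalized Hermite coefficients of a measure. -/
noncomputable def hermiteCoeff (s : ℝ) (ν : Measure ℝ) (k : ℕ) : ℝ :=
  (∫ x, (hermiteVar s k).eval x ∂ν) / (k.factorial * s ^ k)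

lemma sum_hermiteCoeff_mul_integral {ν : Measure ℝ}
    (hν : ∀ k : ℕ, Integrable (fun x : ℝ => x ^ k) ν) (s : ℝ≥0) (hs : s ≠ 0) (D m : ℕ) :
    ∀ j : ℕ, m + j ≤ D →
      ∑ k ∈ Finset.range (D + 1), hermiteCoeff s ν k *
        ∫ x, x ^ m * (hermiteVar s j).eval x * (hermiteVar s k).eval x ∂(gaussianReal 0 s)
        = ∫ x, x ^ m * (hermiteVar s j).eval x ∂ν := by
  have hs' : (s : ℝ) ≠ 0 := by exact_mod_cast hs
  induction m with
  | zero =>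
    intro j h
    simp only [pow_zero, one_mul, integral_hermiteVar_mul_hermiteVar_gaussianReal]
    rw [Finset.sum_eq_single_of_mem j (by simp; omega)
      (fun k _ hk => by rw [if_neg (Ne.symm hk), mul_zero]), if_pos rfl, hermiteCoeff]
    have := Nat.factorial_ne_zero j
    field_simp
  | succ m ih =>
    intro j h
    simp_rw [integral_pow_succ_mul_hermiteVar (integrable_pow_gaussianReal s), mul_add,
      Finset.sum_add_distrib, mul_left_comm _ ((s : ℝ) * j), ← Finset.mul_sum]
    rw [ih _ (by omega), ih _ (by omega)]
    have := integral_pow_succ_mul_hermiteVar hν s m j 1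
    simpa using this.symm

lemma sum_hermiteCoeff_mul_integral_pow {ν : Measure ℝ}
    (hν : ∀ k : ℕ, Integrable (fun x : ℝ => x ^ k) ν) (s : ℝ≥0) (hs : s ≠ 0) {D m : ℕ}
    (h : m ≤ D) :
    ∑ k ∈ Finset.range (D + 1), hermiteCoeff s ν k *
        ∫ x, x ^ m * (hermiteVar s k).eval x ∂(gaussianReal 0 s) = ∫ x, x ^ m ∂ν := by
  simpa [hermiteVar] using sum_hermiteCoeff_mul_integral hν s hs D m 0 h

/-- Multi-indices of total degree at most `D`. -/
def multiIdx (D N : ℕ) : Finset (Fin N → ℕ) :=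
  (Fintype.piFinset fun _ : Fin N => Finset.range (D + 1)).filter fun α => ∑ i, α i ≤ D

/-- The low-degree part of the likelihood ratio of `ν^N` with respect to `N(0, s)^N`. -/
noncomputable def lowDegRatio (s : ℝ) (ν : Measure ℝ) (D : ℕ) {N : ℕ} (v : Fin N → ℝ) : ℝ :=
  ∑ α ∈ multiIdx D N, ∏ i, hermiteCoeff s ν (α i) * (hermiteVar s (α i)).eval (v i)

/-- The law of an `N × n` matrix with i.i.d. `N(0, s)` entries. -/
noncomputable def gaussMat (N n : ℕ) (s : ℝ≥0) : Measure (Fin N → Fin n → ℝ) :=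
  Measure.pi fun _ => Measure.pi fun _ => gaussianReal 0 s

instance (N n : ℕ) (s : ℝ≥0) : IsProbabilityMeasure (gaussMat N n s) := by
  unfold gaussMat; infer_instance

lemma integrable_prod_pow_gaussMat {N n : ℕ} (s : ℝ≥0) (e : Fin N → Fin n → ℕ) :
    Integrable (fun Y : Fin N → Fin n → ℝ => ∏ i, ∏ j, Y i j ^ e i j) (gaussMat N n s) := by
  have hrow : ∀ i, Integrable (fun y : Fin n → ℝ => ∏ j, y j ^ e i j)
      (Measure.pi fun _ => gaussianReal 0 s) := fun i =>
    Integrable.fintype_prod fun j => integrable_pow_gaussianReal s (e i j)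
  exact Integrable.fintype_prod hrow

lemma integral_prod_pow_gaussMat {N n : ℕ} (s : ℝ≥0) (e : Fin N → Fin n → ℕ) :
    ∫ Y : Fin N → Fin n → ℝ, ∏ i, ∏ j, Y i j ^ e i j ∂(gaussMat N n s)
      = ∏ i, ∏ j, ∫ x, x ^ e i j ∂(gaussianReal 0 s) := by
  rw [gaussMat, integral_fintype_prod_eq_prod (f := fun i (y : Fin n → ℝ) => ∏ j, y j ^ e i j)]
  refine Finset.prod_congr rfl fun i _ => ?_
  rw [integral_fintype_prod_eq_prod (f := fun j (x : ℝ) => x ^ e i j)]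

lemma sum_multiIdx_prod {D N : ℕ} (A : Fin N → ℕ → ℝ) (d : Fin N → ℕ) (hd : ∑ i, d i ≤ D)
    (hA : ∀ i k, d i < k → A i k = 0) :
    ∑ α ∈ multiIdx D N, ∏ i, A i (α i) = ∏ i, ∑ k ∈ Finset.range (D + 1), A i k := by
  rw [Finset.prod_univ_sum, multiIdx]
  refine Finset.sum_filter_of_ne fun α _ hα => ?_
  refine le_trans (Finset.sum_le_sum fun i _ => ?_) hd
  by_contra h
  exact hα (Finset.prod_eq_zero (Finset.mem_univ i) (hA i _ (not_le.1 h)))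

lemma integral_monomial_mul_lowDegRatio {ν : Measure ℝ}
    (hν : ∀ k : ℕ, Integrable (fun x : ℝ => x ^ k) ν) (s : ℝ≥0) (hs : s ≠ 0) {D N n : ℕ}
    (d : Fin N → Fin (n + 1) → ℕ) (hd : ∑ i, d i 0 ≤ D) :
    Integrable (fun Y => (∏ i, ∏ j, Y i j ^ d i j) * lowDegRatio s ν D (fun i => Y i 0))
      (gaussMat N (n + 1) s) ∧
    ∫ Y, (∏ i, ∏ j, Y i j ^ d i j) * lowDegRatio s ν D (fun i => Y i 0) ∂(gaussMat N (n + 1) s)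
      = (∏ i, ∫ x, x ^ d i 0 ∂ν) * ∏ i, ∏ j : Fin n, ∫ x, x ^ d i j.succ ∂(gaussianReal 0 s) := by
  set F : ℕ → Fin N → Fin (n + 1) → ℝ → ℝ := fun k i => Fin.cases
    (fun x => x ^ d i 0 * (hermiteVar s k).eval x) (fun j x => x ^ d i j.succ) with hF
  have hFi : ∀ k i j, Integrable (F k i j) (gaussianReal 0 s) := by
    intro k i j
    refine Fin.cases ?_ (fun j => ?_) j
    · simp only [hF, Fin.cases_zero]
      exact (integrable_eval_polynomial (integrable_pow_gaussianReal s)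
        (Polynomial.X ^ d i 0 * hermiteVar s k)).congr (.of_forall fun x => by simp)
    · simpa [hF] using integrable_pow_gaussianReal s (d i j.succ)
  have hrow : ∀ k i, Integrable (fun y : Fin (n + 1) → ℝ => hermiteCoeff s ν k * ∏ j, F k i j (y j))
      (Measure.pi fun _ => gaussianReal 0 s) := fun k i =>
    (Integrable.fintype_prod (f := F k i) (hFi k i)).const_mul _
  have hterm : ∀ α : Fin N → ℕ, Integrable (fun Y : Fin N → Fin (n + 1) → ℝ =>
      ∏ i, (hermiteCoeff s ν (α i) * ∏ j, F (α i) i j (Y i j))) (gaussMat N (n + 1) s) := fun α =>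
    Integrable.fintype_prod (f := fun i (y : Fin (n + 1) → ℝ) =>
      hermiteCoeff s ν (α i) * ∏ j, F (α i) i j (y j)) fun i => hrow _ _
  have heq : ∀ Y : Fin N → Fin (n + 1) → ℝ,
      (∏ i, ∏ j, Y i j ^ d i j) * lowDegRatio s ν D (fun i => Y i 0)
        = ∑ α ∈ multiIdx D N, ∏ i, (hermiteCoeff s ν (α i) * ∏ j, F (α i) i j (Y i j)) := by
    intro Y
    rw [lowDegRatio, Finset.mul_sum]
    refine Finset.sum_congr rfl fun α _ => ?_
    rw [← Finset.prod_mul_distrib]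
    refine Finset.prod_congr rfl fun i _ => ?_
    simp only [Fin.prod_univ_succ, hF, Fin.cases_zero, Fin.cases_succ]
    ring
  simp_rw [heq]
  refine ⟨integrable_finsetSum _ fun α _ => hterm α, ?_⟩
  rw [integral_finsetSum _ fun α _ => hterm α]
  have h_integrable : ∀ α : Fin N → ℕ, ∫ Y : Fin N → Fin (n + 1) → ℝ,
      ∏ i, (hermiteCoeff s ν (α i) * ∏ j, F (α i) i j (Y i j)) ∂(gaussMat N (n + 1) s)
      = (∏ i, hermiteCoeff s ν (α i) *
          ∫ x, x ^ d i 0 * (hermiteVar s (α i)).eval x ∂(gaussianReal 0 s))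
        * ∏ i, ∏ j : Fin n, ∫ x, x ^ d i j.succ ∂(gaussianReal 0 s) := by
    intro α
    rw [gaussMat, integral_fintype_prod_eq_prod (f := fun i (y : Fin (n + 1) → ℝ) =>
      hermiteCoeff s ν (α i) * ∏ j, F (α i) i j (y j)), ← Finset.prod_mul_distrib]
    refine Finset.prod_congr rfl fun i _ => ?_
    rw [integral_const_mul, integral_fintype_prod_eq_prod (f := F (α i) i), Fin.prod_univ_succ]
    simp only [hF, Fin.cases_zero, Fin.cases_succ]
    ring
  simp_rw [h_integrable, ← Finset.sum_mul]
  congr 1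
  rw [sum_multiIdx_prod (fun i k => hermiteCoeff s ν k *
    ∫ x, x ^ d i 0 * (hermiteVar s k).eval x ∂(gaussianReal 0 s)) (fun i => d i 0) hd]
  · refine Finset.prod_congr rfl fun i _ => sum_hermiteCoeff_mul_integral_pow hν s hs ?_
    exact (Finset.single_le_sum (f := fun i => d i 0) (fun _ _ => Nat.zero_le _)
      (Finset.mem_univ i)).trans hd
  · intro i k h
    have := integral_pow_mul_hermiteVar_eq_zero s (d i 0) 0 k h
    simp only [hermiteVar, Polynomial.eval_one, mul_one] at this
    simp [this]

lemma integral_planted_eq {ν : Measure ℝ} [SigmaFinite ν]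
    (hν : ∀ k : ℕ, Integrable (fun x : ℝ => x ^ k) ν) (s : ℝ≥0) (hs : s ≠ 0) {D N n : ℕ}
    (g : MvPolynomial (Fin N × Fin (n + 1)) ℝ) (hg : g.totalDegree ≤ D) :
    Integrable (fun z : (Fin N → ℝ) × (Fin N → Fin n → ℝ) => MvPolynomial.eval
        (fun q => (Fin.cons (z.1 q.1) (z.2 q.1) : Fin (n + 1) → ℝ) q.2) g)
        ((Measure.pi fun _ => ν).prod (gaussMat N n s)) ∧
    ∫ z : (Fin N → ℝ) × (Fin N → Fin n → ℝ), MvPolynomial.eval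
        (fun q => (Fin.cons (z.1 q.1) (z.2 q.1) : Fin (n + 1) → ℝ) q.2) g
        ∂((Measure.pi fun _ => ν).prod (gaussMat N n s))
      = ∫ Y, MvPolynomial.eval (fun q => Y q.1 q.2) g * lowDegRatio s ν D (fun i => Y i 0)
        ∂(gaussMat N (n + 1) s) := by
  have hdeg : ∀ d ∈ g.support, ∑ i, d (i, 0) ≤ D := by
    intro d hd
    have h1 := (MvPolynomial.le_totalDegree hd).trans hg
    rw [Finsupp.sum_fintype _ _ (fun _ => rfl), Fintype.sum_prod_type] at h1
    refine le_trans (Finset.sum_le_sum fun i _ => ?_) h1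
    exact Finset.single_le_sum (f := fun j => d (i, j)) (fun _ _ => Nat.zero_le _)
      (Finset.mem_univ 0)
  have hsplit : ∀ (d : Fin N × Fin (n + 1) →₀ ℕ) (z : (Fin N → ℝ) × (Fin N → Fin n → ℝ)),
      ∏ i, ∏ j, (Fin.cons (z.1 i) (z.2 i) : Fin (n + 1) → ℝ) j ^ d (i, j)
        = (∏ i, z.1 i ^ d (i, 0)) * ∏ i, ∏ j, z.2 i j ^ d (i, j.succ) := by
    intro d z
    simp only [Fin.prod_univ_succ, Fin.cons_zero, Fin.cons_succ, Finset.prod_mul_distrib]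
  have hi1 : ∀ d : Fin N × Fin (n + 1) →₀ ℕ, Integrable
      (fun z : (Fin N → ℝ) × (Fin N → Fin n → ℝ) =>
        (∏ i, z.1 i ^ d (i, 0)) * ∏ i, ∏ j, z.2 i j ^ d (i, j.succ))
        ((Measure.pi fun _ => ν).prod (gaussMat N n s)) := by
    intro d
    refine Integrable.mul_prod (f := fun v : Fin N → ℝ => ∏ i, v i ^ d (i, 0))
      (g := fun B : Fin N → Fin n → ℝ => ∏ i, ∏ j, B i j ^ d (i, j.succ)) ?_ ?_
    · exact Integrable.fintype_prod (f := fun i (x : ℝ) => x ^ d (i, 0)) fun i => hν _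
    · exact integrable_prod_pow_gaussMat s fun i j => d (i, j.succ)
  have hm := fun (d : Fin N × Fin (n + 1) →₀ ℕ) (hd : d ∈ g.support) =>
    integral_monomial_mul_lowDegRatio hν s hs (fun i j => d (i, j)) (hdeg d hd)
  simp_rw [MvPolynomial.eval_eq', Fintype.prod_prod_type, hsplit, Finset.sum_mul, mul_assoc]
  refine ⟨integrable_finsetSum _ fun d _ => (hi1 d).const_mul _, ?_⟩
  rw [integral_finsetSum _ fun d _ => (hi1 d).const_mul _,
    integral_finsetSum _ fun d hd => (hm d hd).1.const_mul _]
  refine Finset.sum_congr rfl fun d hd => ?_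
  rw [integral_const_mul, integral_const_mul, (hm d hd).2,
    integral_prod_mul (fun v : Fin N → ℝ => ∏ i, v i ^ d (i, 0))
      (fun B : Fin N → Fin n → ℝ => ∏ i, ∏ j, B i j ^ d (i, j.succ)),
    integral_fintype_prod_eq_prod (f := fun i (x : ℝ) => x ^ d (i, 0)),
    integral_prod_pow_gaussMat s fun i j => d (i, j.succ)]

lemma totalDegree_aeval_le_of_totalDegree_le_one {σ τ : Type*} (f : MvPolynomial σ ℝ)
    (g : σ → MvPolynomial τ ℝ) (hg : ∀ i, (g i).totalDegree ≤ 1) :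
    (MvPolynomial.aeval g f).totalDegree ≤ f.totalDegree := by
  rw [MvPolynomial.aeval_def, MvPolynomial.eval₂_eq]
  refine MvPolynomial.totalDegree_finsetSum_le fun d hd => ?_
  refine le_trans ((MvPolynomial.totalDegree_mul _ _).trans ?_) (MvPolynomial.le_totalDegree hd)
  have h0 : (algebraMap ℝ (MvPolynomial τ ℝ) (MvPolynomial.coeff d f)).totalDegree = 0 :=
    MvPolynomial.totalDegree_C _
  rw [h0, zero_add]
  refine (MvPolynomial.totalDegree_finsetProd _ _).trans (Finset.sum_le_sum fun i _ => ?_)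
  refine (MvPolynomial.totalDegree_pow _ _).trans ?_
  simpa using Nat.mul_le_mul_left (d i) (hg i)

lemma integrable_eval_gaussMat {N n : ℕ} (s : ℝ≥0) (f : MvPolynomial (Fin N × Fin n) ℝ) :
    Integrable (fun Y => MvPolynomial.eval (fun q => Y q.1 q.2) f) (gaussMat N n s) := by
  simp_rw [MvPolynomial.eval_eq', Fintype.prod_prod_type]
  exact integrable_finsetSum _ fun d _ =>
    (integrable_prod_pow_gaussMat s fun i j => d (i, j)).const_mul _

lemma continuous_eval_matrix {N n : ℕ} (f : MvPolynomial (Fin N × Fin n) ℝ) :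
    Continuous fun Y : Fin N → Fin n → ℝ => MvPolynomial.eval (fun q => Y q.1 q.2) f := by
  simp_rw [MvPolynomial.eval_eq']
  fun_prop

lemma memLp_eval_gaussMat {N n : ℕ} (s : ℝ≥0) (f : MvPolynomial (Fin N × Fin n) ℝ) :
    MemLp (fun Y => MvPolynomial.eval (fun q => Y q.1 q.2) f) 2 (gaussMat N n s) := by
  refine (memLp_two_iff_integrable_sq (continuous_eval_matrix f).aestronglyMeasurable).2 ?_
  exact (integrable_eval_gaussMat s (f ^ 2)).congr (.of_forall fun Y => map_pow _ _ _)

/-- The low-degree likelihood ratio of a planted direction `u`. -/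
noncomputable def dirRatio (s : ℝ) (ν : Measure ℝ) (D : ℕ) {N n : ℕ} (u : Fin n → ℝ)
    (Y : Fin N → Fin n → ℝ) : ℝ :=
  lowDegRatio s ν D fun i => u ⬝ᵥ Y i

lemma continuous_dirRatio_right (s : ℝ) (ν : Measure ℝ) (D : ℕ) {N n : ℕ} (u : Fin n → ℝ) :
    Continuous fun Y : Fin N → Fin n → ℝ => dirRatio s ν D u Y := by
  unfold dirRatio lowDegRatio dotProduct
  fun_prop

lemma measurePreserving_mul_gaussMat {N n : ℕ} (s : ℝ≥0) (Q : Matrix (Fin n) (Fin n) ℝ)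
    (hQ : Q * Qᵀ = 1) :
    MeasurePreserving (fun (Y : Fin N → Fin n → ℝ) i => Y i ᵥ* Q)
      (gaussMat N n s) (gaussMat N n s) :=
  measurePreserving_pi _ _ fun _ => measurePreserving_vecMul_gaussianReal s Q hQ

lemma eval_aeval_eq {σ τ : Type*} (f : MvPolynomial σ ℝ) (g : σ → MvPolynomial τ ℝ)
    (x : τ → ℝ) : MvPolynomial.eval x (MvPolynomial.aeval g f)
      = MvPolynomial.eval (fun i => MvPolynomial.eval x (g i)) f := by
  induction f using MvPolynomial.induction_on with
  | C a => simp
  | add p q hp hq => rw [map_add, map_add, map_add, hp, hq]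
  | mul_X p i hp => rw [map_mul, map_mul, map_mul, hp, MvPolynomial.aeval_X, MvPolynomial.eval_X]

/-- The polynomial obtained from `f` by right multiplication of the matrix of variables by `Q`. -/
noncomputable def rightMulPoly {N n : ℕ} (Q : Matrix (Fin n) (Fin n) ℝ)
    (f : MvPolynomial (Fin N × Fin n) ℝ) : MvPolynomial (Fin N × Fin n) ℝ :=
  MvPolynomial.aeval (fun q : Fin N × Fin n =>
    ∑ j, MvPolynomial.C (Q j q.2) * MvPolynomial.X (R := ℝ) (q.1, j)) f

lemma totalDegree_rightMulPoly_le {N n : ℕ} (Q : Matrix (Fin n) (Fin n) ℝ)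
    (f : MvPolynomial (Fin N × Fin n) ℝ) : (rightMulPoly Q f).totalDegree ≤ f.totalDegree := by
  refine totalDegree_aeval_le_of_totalDegree_le_one f _ fun q => ?_
  refine MvPolynomial.totalDegree_finsetSum_le fun j _ => ?_
  refine (MvPolynomial.totalDegree_mul _ _).trans ?_
  simp

lemma eval_rightMulPoly {N n : ℕ} (Q : Matrix (Fin n) (Fin n) ℝ)
    (f : MvPolynomial (Fin N × Fin n) ℝ) (Y : Fin N → Fin n → ℝ) :
    MvPolynomial.eval (fun q => Y q.1 q.2) (rightMulPoly Q f)
      = MvPolynomial.eval (fun q => (Y q.1 ᵥ* Q) q.2) f := by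
  rw [rightMulPoly, eval_aeval_eq]
  congr 2
  ext q
  simp [vecMul, dotProduct, mul_comm]

lemma dirRatio_mul (s : ℝ) (ν : Measure ℝ) (D : ℕ) {N n : ℕ}
    (Q : Matrix (Fin (n + 1)) (Fin (n + 1)) ℝ) (hQ : Q * Qᵀ = 1) (Y : Fin N → Fin (n + 1) → ℝ) :
    dirRatio s ν D (Q 0) (fun i => Y i ᵥ* Q) = lowDegRatio s ν D fun i => Y i 0 := by
  rw [dirRatio]
  congr 1
  ext i
  rw [dotProduct_comm, ← dotProduct_mulVec]
  have : Q *ᵥ Q 0 = Pi.single 0 1 := by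
    ext j
    have := congrFun (congrFun hQ j) 0
    rw [Matrix.mul_apply] at this
    simpa [mulVec, dotProduct, Matrix.one_apply, Pi.single_apply] using this
  simp [this]

lemma integral_planted_mul_eq {ν : Measure ℝ} [SigmaFinite ν]
    (hν : ∀ k : ℕ, Integrable (fun x : ℝ => x ^ k) ν) (s : ℝ≥0) (hs : s ≠ 0) {D N n : ℕ}
    (Q : Matrix (Fin (n + 1)) (Fin (n + 1)) ℝ) (hQ : Q * Qᵀ = 1)
    (f : MvPolynomial (Fin N × Fin (n + 1)) ℝ) (hf : f.totalDegree ≤ D) :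
    Integrable (fun z : (Fin N → ℝ) × (Fin N → Fin n → ℝ) => MvPolynomial.eval
        (fun q => ((Fin.cons (z.1 q.1) (z.2 q.1) : Fin (n + 1) → ℝ) ᵥ* Q) q.2) f)
        ((Measure.pi fun _ => ν).prod (gaussMat N n s)) ∧
    ∫ z : (Fin N → ℝ) × (Fin N → Fin n → ℝ), MvPolynomial.eval
        (fun q => ((Fin.cons (z.1 q.1) (z.2 q.1) : Fin (n + 1) → ℝ) ᵥ* Q) q.2) f
        ∂((Measure.pi fun _ => ν).prod (gaussMat N n s))
      = ∫ Y, MvPolynomial.eval (fun q => Y q.1 q.2) f * dirRatio s ν D (Q 0) Y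
        ∂(gaussMat N (n + 1) s) := by
  have h := integral_planted_eq hν s hs (rightMulPoly Q f)
    ((totalDegree_rightMulPoly_le Q f).trans hf)
  have e : (fun z : (Fin N → ℝ) × (Fin N → Fin n → ℝ) => MvPolynomial.eval
        (fun q => ((Fin.cons (z.1 q.1) (z.2 q.1) : Fin (n + 1) → ℝ) ᵥ* Q) q.2) f)
      = fun z => MvPolynomial.eval (fun q : Fin N × Fin (n + 1) =>
        (Fin.cons (z.1 q.1) (z.2 q.1) : Fin (n + 1) → ℝ) q.2) (rightMulPoly Q f) :=
    funext fun z => (eval_rightMulPoly Q f fun i =>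
      (Fin.cons (z.1 i) (z.2 i) : Fin (n + 1) → ℝ)).symm
  rw [e]
  refine ⟨h.1, h.2.trans ?_⟩
  have hcont : Continuous fun Y : Fin N → Fin (n + 1) → ℝ =>
      MvPolynomial.eval (fun q => Y q.1 q.2) f * dirRatio s ν D (Q 0) Y :=
    (continuous_eval_matrix f).mul (continuous_dirRatio_right s ν D (Q 0))
  have hmp := measurePreserving_mul_gaussMat (N := N) s Q hQ
  conv_rhs => rw [← hmp.map_eq]
  refine Eq.trans ?_ (integral_map hmp.measurable.aemeasurable hcont.aestronglyMeasurable).symm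
  simp only [eval_rightMulPoly, dirRatio_mul _ _ _ Q hQ]

/-- The weight of the degree-`k` Hermite component of `ν`. -/
noncomputable def hermiteWeight (s : ℝ) (ν : Measure ℝ) (k : ℕ) : ℝ :=
  hermiteCoeff s ν k ^ 2 * (k.factorial * s ^ k)

lemma integral_dirRatio_mul_dirRatio (ν : Measure ℝ) (s : ℝ≥0) (D : ℕ) {N n : ℕ}
    (u w : Fin n → ℝ) (hu : u ⬝ᵥ u = 1) (hw : w ⬝ᵥ w = 1) :
    Integrable (fun Y : Fin N → Fin n → ℝ => dirRatio s ν D u Y * dirRatio s ν D w Y)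
      (gaussMat N n s) ∧
    ∫ Y : Fin N → Fin n → ℝ, dirRatio s ν D u Y * dirRatio s ν D w Y ∂(gaussMat N n s)
      = ∑ α ∈ multiIdx D N, (∏ i, hermiteWeight s ν (α i)) * (u ⬝ᵥ w) ^ (∑ i, α i) := by
  have heq : ∀ Y : Fin N → Fin n → ℝ, dirRatio s ν D u Y * dirRatio s ν D w Y
      = ∑ α ∈ multiIdx D N, ∑ β ∈ multiIdx D N,
        ∏ i, (hermiteCoeff s ν (α i) * hermiteCoeff s ν (β i)
          * ((hermiteVar s (α i)).eval (u ⬝ᵥ Y i) * (hermiteVar s (β i)).eval (w ⬝ᵥ Y i))) := by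
    intro Y
    rw [dirRatio, dirRatio, lowDegRatio, lowDegRatio, Finset.sum_mul_sum]
    refine Finset.sum_congr rfl fun α _ => Finset.sum_congr rfl fun β _ => ?_
    rw [← Finset.prod_mul_distrib]
    exact Finset.prod_congr rfl fun i _ => by ring
  have hi : ∀ α β : Fin N → ℕ, Integrable (fun Y : Fin N → Fin n → ℝ =>
      ∏ i, (hermiteCoeff s ν (α i) * hermiteCoeff s ν (β i)
          * ((hermiteVar s (α i)).eval (u ⬝ᵥ Y i) * (hermiteVar s (β i)).eval (w ⬝ᵥ Y i))))
      (gaussMat N n s) := fun α β =>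
    Integrable.fintype_prod (f := fun i (y : Fin n → ℝ) =>
      hermiteCoeff s ν (α i) * hermiteCoeff s ν (β i)
          * ((hermiteVar s (α i)).eval (u ⬝ᵥ y) * (hermiteVar s (β i)).eval (w ⬝ᵥ y)))
      fun i => (integrable_eval_dotProduct s u w _ _).const_mul _
  simp_rw [heq]
  refine ⟨integrable_finsetSum _ fun α _ => integrable_finsetSum _ fun β _ => hi α β, ?_⟩
  rw [integral_finsetSum _ fun α _ => integrable_finsetSum _ fun β _ => hi α β]
  refine Finset.sum_congr rfl fun α hα => ?_
  rw [integral_finsetSum _ fun β _ => hi α β]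
  have h_integrable : ∀ β : Fin N → ℕ, ∫ Y : Fin N → Fin n → ℝ,
      ∏ i, (hermiteCoeff s ν (α i) * hermiteCoeff s ν (β i)
          * ((hermiteVar s (α i)).eval (u ⬝ᵥ Y i) * (hermiteVar s (β i)).eval (w ⬝ᵥ Y i)))
      ∂(gaussMat N n s) = ∏ i, (hermiteCoeff s ν (α i) * hermiteCoeff s ν (β i)
        * if α i = β i then (β i).factorial * (s : ℝ) ^ (β i) * (u ⬝ᵥ w) ^ (β i) else 0) := by
    intro β
    rw [gaussMat, integral_fintype_prod_eq_prod (f := fun i (y : Fin n → ℝ) =>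
      hermiteCoeff s ν (α i) * hermiteCoeff s ν (β i)
          * ((hermiteVar s (α i)).eval (u ⬝ᵥ y) * (hermiteVar s (β i)).eval (w ⬝ᵥ y)))]
    refine Finset.prod_congr rfl fun i _ => ?_
    rw [integral_const_mul, integral_hermiteVar_mul_hermiteVar s u w hu hw]
  simp_rw [h_integrable]
  rw [Finset.sum_eq_single_of_mem α hα, ← Finset.prod_pow_eq_pow_sum, ← Finset.prod_mul_distrib]
  · refine Finset.prod_congr rfl fun i _ => ?_
    rw [if_pos rfl, hermiteWeight]
    ring
  · intro β _ hβ
    obtain ⟨i, hi⟩ := Function.ne_iff.1 hβ.symm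
    exact Finset.prod_eq_zero (Finset.mem_univ i) (by rw [if_neg hi, mul_zero])

lemma exists_orthogonal_row_eq {n : ℕ} (i : Fin n) (a : Fin n → ℝ) (ha : a ⬝ᵥ a = 1) :
    ∃ R : Matrix (Fin n) (Fin n) ℝ, Rᵀ * R = 1 ∧ R i = a := by
  have hv : Orthonormal ℝ (({i} : Set (Fin n)).domRestrict
      fun _ => (WithLp.toLp 2 a : EuclideanSpace ℝ (Fin n))) := by
    rw [orthonormal_iff_ite]
    rintro ⟨j, rfl⟩ ⟨k, rfl⟩
    rw [if_pos rfl, EuclideanSpace.inner_eq_star_dotProduct]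
    simpa using ha
  obtain ⟨b, hb⟩ := hv.exists_orthonormalBasis_extension_of_card_eq (by simp)
  refine ⟨Matrix.of fun j k => b j k, ?_, ?_⟩
  · rw [mul_eq_one_comm]
    ext j k
    have h := orthonormal_iff_ite.1 b.orthonormal j k
    rw [EuclideanSpace.inner_eq_star_dotProduct] at h
    rw [Matrix.mul_apply, Matrix.one_apply, ← h]
    simp [dotProduct, mul_comm]
  · ext k
    simp only [Matrix.of_apply]
    rw [hb i rfl]

lemma abs_pow_le_factorial_mul_cosh (t : ℝ) (d : ℕ) :
    |t| ^ d ≤ 2 * d.factorial * Real.cosh t := by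
  have h1 := Real.pow_div_factorial_le_exp |t| (abs_nonneg t) d
  rw [div_le_iff₀ (by positivity)] at h1
  have h2 : Real.exp |t| ≤ 2 * Real.cosh t := by
    rw [← Real.cosh_abs, Real.cosh_eq]
    have := Real.exp_pos (-|t|)
    linarith
  calc |t| ^ d ≤ Real.exp |t| * d.factorial := h1
    _ ≤ 2 * Real.cosh t * d.factorial := by gcongr
    _ = _ := by ring

/-- The sign vector attached to a Boolean vector. -/
def signVec {n : ℕ} (ε : Fin n → Bool) (i : Fin n) : ℝ := if ε i then 1 else -1

lemma signVec_dotProduct_self {n : ℕ} (ε : Fin n → Bool) : signVec ε ⬝ᵥ signVec ε = n := by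
  have : ∀ i, signVec ε i * signVec ε i = 1 := fun i => by
    rw [signVec]; split_ifs <;> norm_num
  simp [dotProduct, this]

lemma sum_exp_signVec {n : ℕ} (w : Fin n → ℝ) :
    ∑ ε : Fin n → Bool, Real.exp (signVec ε ⬝ᵥ w) = ∏ i, (2 * Real.cosh (w i)) := by
  have : ∀ i, 2 * Real.cosh (w i) = ∑ b : Bool, Real.exp ((if b then 1 else -1) * w i) := by
    intro i
    rw [Real.cosh_eq]
    simp
    ring
  simp_rw [this, Finset.prod_univ_sum, Fintype.piFinset_univ, ← Real.exp_sum]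
  rfl

lemma sum_abs_signVec_pow_le {n : ℕ} (w : Fin n → ℝ) (hw : w ⬝ᵥ w = 1) (d : ℕ) :
    ∑ ε : Fin n → Bool, |signVec ε ⬝ᵥ w| ^ d ≤ 2 ^ n * (4 * d.factorial) := by
  have hE : ∀ w : Fin n → ℝ, w ⬝ᵥ w = 1 →
      ∑ ε : Fin n → Bool, Real.exp (signVec ε ⬝ᵥ w) ≤ 2 ^ n * 2 := by
    intro w hw
    rw [sum_exp_signVec, Finset.prod_mul_distrib, Finset.prod_const, Finset.card_univ,
      Fintype.card_fin]
    gcongr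
    calc ∏ i, Real.cosh (w i) ≤ ∏ i, Real.exp (w i ^ 2 / 2) :=
          Finset.prod_le_prod (fun i _ => (Real.cosh_pos _).le)
            fun i _ => Real.cosh_le_exp_half_sq _
      _ = Real.exp (1 / 2) := by
          rw [← Real.exp_sum, ← Finset.sum_div]
          congr 2
          simpa [dotProduct, pow_two] using hw
      _ ≤ 2 := by
          rw [← Real.sqrt_sq (Real.exp_pos (1/2)).le, Real.sqrt_le_left (by norm_num),
            ← Real.exp_nat_mul]
          have := Real.exp_one_lt_d9
          norm_num
          linarith
  calc ∑ ε : Fin n → Bool, |signVec ε ⬝ᵥ w| ^ d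
      ≤ ∑ ε : Fin n → Bool, 2 * d.factorial * Real.cosh (signVec ε ⬝ᵥ w) :=
        Finset.sum_le_sum fun ε _ => abs_pow_le_factorial_mul_cosh _ d
    _ = d.factorial * (∑ ε : Fin n → Bool, Real.exp (signVec ε ⬝ᵥ w)
          + ∑ ε : Fin n → Bool, Real.exp (signVec ε ⬝ᵥ -w)) := by
        rw [← Finset.sum_add_distrib, Finset.mul_sum]
        refine Finset.sum_congr rfl fun ε _ => ?_
        rw [Real.cosh_eq, dotProduct_neg]
        ring
    _ ≤ d.factorial * (2 ^ n * 2 + 2 ^ n * 2) := by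
        gcongr
        · exact hE w hw
        · exact hE (-w) (by simpa using hw)
    _ = _ := by ring

lemma abs_integral_row_dotProduct_pow_le {n : ℕ} (μ : Measure (Fin (n + 1) → Fin (n + 1) → ℝ))
    [IsProbabilityMeasure μ] (horth : ∀ᵐ Q ∂μ, (Matrix.of Q)ᵀ * Matrix.of Q = 1)
    (hinv : ∀ R : Matrix (Fin (n + 1)) (Fin (n + 1)) ℝ, Rᵀ * R = 1 →
      Measure.map (fun Q => fun i j => (R * Matrix.of Q) i j) μ = μ)
    (x : Fin (n + 1) → ℝ) (hx : x ⬝ᵥ x = 1) (d : ℕ) :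
    |∫ Q, (Q 0 ⬝ᵥ x) ^ d ∂μ| * √(n + 1 : ℕ) ^ d ≤ 4 * d.factorial := by
  have hn : (0 : ℝ) < √(n + 1 : ℕ) := by positivity
  have hsum : ∀ᵐ Q ∂μ, ∑ ε : Fin (n + 1) → Bool, |signVec ε ⬝ᵥ (Matrix.of Q *ᵥ x)| ^ d
      ≤ 2 ^ (n + 1) * (4 * d.factorial) := by
    filter_upwards [horth] with Q hQ
    refine sum_abs_signVec_pow_le _ ?_ d
    rw [dotProduct_mulVec, vecMul_mulVec, ← mulVec_transpose]
    simp [hQ, hx]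
  have hcont : ∀ ε : Fin (n + 1) → Bool, Continuous fun Q : Fin (n + 1) → Fin (n + 1) → ℝ =>
      |signVec ε ⬝ᵥ (Matrix.of Q *ᵥ x)| ^ d := fun ε => by
    simp only [mulVec, dotProduct, Matrix.of_apply]
    fun_prop
  have h_integrable : ∀ ε : Fin (n + 1) → Bool,
      Integrable (fun Q => |signVec ε ⬝ᵥ (Matrix.of Q *ᵥ x)| ^ d) μ := fun ε => by
    refine Integrable.of_bound (hcont ε).aestronglyMeasurable (2 ^ (n + 1) * (4 * d.factorial)) ?_
    filter_upwards [hsum] with Q hQ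
    rw [Real.norm_of_nonneg (by positivity)]
    exact (Finset.single_le_sum (f := fun ε => |signVec ε ⬝ᵥ (Matrix.of Q *ᵥ x)| ^ d)
      (fun _ _ => by positivity) (Finset.mem_univ ε)).trans hQ
  have hε : ∀ ε : Fin (n + 1) → Bool, |∫ Q, (Q 0 ⬝ᵥ x) ^ d ∂μ| * √(n + 1 : ℕ) ^ d
      ≤ ∫ Q, |signVec ε ⬝ᵥ (Matrix.of Q *ᵥ x)| ^ d ∂μ := by
    intro ε
    obtain ⟨R, hR, hR0⟩ := exists_orthogonal_row_eq 0 ((√(n + 1 : ℕ))⁻¹ • signVec ε) (by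
      rw [smul_dotProduct, dotProduct_smul, signVec_dotProduct_self, smul_eq_mul, smul_eq_mul,
        ← mul_assoc, ← mul_inv, Real.mul_self_sqrt (by positivity)]
      exact inv_mul_cancel₀ (by positivity))
    have hc : Continuous fun Q : Fin (n + 1) → Fin (n + 1) → ℝ => (Q 0 ⬝ᵥ x) ^ d := by
      simp only [dotProduct]
      fun_prop
    have hm : Continuous fun Q : Fin (n + 1) → Fin (n + 1) → ℝ =>
        fun i j => (R * Matrix.of Q) i j := by
      simp only [Matrix.mul_apply, Matrix.of_apply]
      fun_prop
    have h1 : ∫ Q, (Q 0 ⬝ᵥ x) ^ d ∂μ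
        = ∫ Q, ((√(n + 1 : ℕ))⁻¹) ^ d * (signVec ε ⬝ᵥ (Matrix.of Q *ᵥ x)) ^ d ∂μ := by
      conv_lhs => rw [← hinv R hR]
      rw [integral_map hm.aemeasurable hc.aestronglyMeasurable]
      refine integral_congr_ae (.of_forall fun Q => ?_)
      have : (fun j => (R * Matrix.of Q) 0 j) = R 0 ᵥ* Matrix.of Q := rfl
      simp only [this, hR0]
      rw [← dotProduct_mulVec, smul_dotProduct, smul_eq_mul, mul_pow]
    rw [h1, integral_const_mul, abs_mul, abs_of_pos (by positivity), mul_right_comm, ← mul_pow,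
      inv_mul_cancel₀ hn.ne', one_pow, one_mul]
    simpa only [abs_pow] using abs_integral_le_integral_abs
      (f := fun Q => (signVec ε ⬝ᵥ (Matrix.of Q *ᵥ x)) ^ d) (μ := μ)
  have hfin : 2 ^ (n + 1) * (|∫ Q, (Q 0 ⬝ᵥ x) ^ d ∂μ| * √(n + 1 : ℕ) ^ d)
      ≤ 2 ^ (n + 1) * (4 * d.factorial) := by
    calc 2 ^ (n + 1) * (|∫ Q, (Q 0 ⬝ᵥ x) ^ d ∂μ| * √(n + 1 : ℕ) ^ d)
        = ∑ _ε : Fin (n + 1) → Bool, |∫ Q, (Q 0 ⬝ᵥ x) ^ d ∂μ| * √(n + 1 : ℕ) ^ d := by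
          simp
      _ ≤ ∑ ε : Fin (n + 1) → Bool, ∫ Q, |signVec ε ⬝ᵥ (Matrix.of Q *ᵥ x)| ^ d ∂μ :=
          Finset.sum_le_sum fun ε _ => hε ε
      _ = ∫ Q, ∑ ε : Fin (n + 1) → Bool, |signVec ε ⬝ᵥ (Matrix.of Q *ᵥ x)| ^ d ∂μ :=
          (integral_finsetSum _ fun ε _ => h_integrable ε).symm
      _ ≤ ∫ _Q, 2 ^ (n + 1) * (4 * d.factorial : ℝ) ∂μ :=
          integral_mono_ae (integrable_finsetSum _ fun ε _ => h_integrable ε) (integrable_const _) hsum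
      _ = _ := by simp
  exact le_of_mul_le_mul_left hfin (by positivity)

lemma row_dotProduct_self_of_orthogonal {n : ℕ} {Q : Fin n → Fin n → ℝ}
    (hQ : (Matrix.of Q)ᵀ * Matrix.of Q = 1) (i : Fin n) : Q i ⬝ᵥ Q i = 1 := by
  have h := mul_eq_one_comm.1 hQ
  have h := congrFun (congrFun h i) i
  rw [Matrix.mul_apply, Matrix.one_apply_eq] at h
  exact h

lemma continuous_dirRatio_row (s : ℝ) (ν : Measure ℝ) (D : ℕ) {N n : ℕ} :
    Continuous fun z : (Fin (n + 1) → Fin (n + 1) → ℝ) × (Fin N → Fin (n + 1) → ℝ) =>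
      dirRatio s ν D (z.1 0) z.2 := by
  unfold dirRatio lowDegRatio dotProduct
  fun_prop

lemma memLp_dirRatio_row (s : ℝ≥0) (ν : Measure ℝ) (D N : ℕ) {n : ℕ}
    (μ : Measure (Fin (n + 1) → Fin (n + 1) → ℝ)) [IsProbabilityMeasure μ]
    (horth : ∀ᵐ Q ∂μ, (Matrix.of Q)ᵀ * Matrix.of Q = 1) :
    MemLp (fun z : (Fin (n + 1) → Fin (n + 1) → ℝ) × (Fin N → Fin (n + 1) → ℝ) =>
      dirRatio s ν D (z.1 0) z.2) 2 (μ.prod (gaussMat N (n + 1) s)) := by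
  have hc := continuous_dirRatio_row (N := N) (n := n) s ν D
  refine (memLp_two_iff_integrable_sq hc.aestronglyMeasurable).2 ?_
  refine (integrable_prod_iff (hc.pow 2).aestronglyMeasurable).2 ⟨?_, ?_⟩
  · filter_upwards [horth] with Q hQ
    have hu := row_dotProduct_self_of_orthogonal hQ 0
    exact (integral_dirRatio_mul_dirRatio ν s D (Q 0) (Q 0) hu hu).1.congr
      (.of_forall fun Y => (pow_two _).symm)
  · refine (integrable_const (∑ α ∈ multiIdx D N, (∏ i, hermiteWeight s ν (α i)))).congr ?_
    filter_upwards [horth] with Q hQ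
    have hu := row_dotProduct_self_of_orthogonal hQ 0
    have := (integral_dirRatio_mul_dirRatio (N := N) ν s D (Q 0) (Q 0) hu hu).2
    simp only [hu, one_pow, mul_one] at this
    rw [← this]
    refine integral_congr_ae (.of_forall fun Y => ?_)
    simp [pow_two]

lemma memLp_integral_left_of_prod {A B : Type*} [MeasurableSpace A] [MeasurableSpace B]
    (μ : Measure A) (γ : Measure B) [IsProbabilityMeasure μ] [IsProbabilityMeasure γ]
    (L : A → B → ℝ) (hm : StronglyMeasurable (Function.uncurry L))
    (hL : MemLp (Function.uncurry L) 2 (μ.prod γ)) :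
    MemLp (fun b => ∫ a, L a b ∂μ) 2 γ ∧
    ∫ b, (∫ a, L a b ∂μ) ^ 2 ∂γ = ∫ a', ∫ a, ∫ b, L a b * L a' b ∂γ ∂μ ∂μ := by
  have hsm : StronglyMeasurable fun b => ∫ a, L a b ∂μ := hm.integral_prod_left
  have hp1 : MeasurePreserving (fun z : (A × A) × B => (z.1.1, z.2))
      ((μ.prod μ).prod γ) (μ.prod γ) := measurePreserving_fst.prod (MeasurePreserving.id γ)
  have hp2 : MeasurePreserving (fun z : (A × A) × B => (z.1.2, z.2))
      ((μ.prod μ).prod γ) (μ.prod γ) := measurePreserving_snd.prod (MeasurePreserving.id γ)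
  have h_integrable : Integrable (fun z : (A × A) × B => L z.1.1 z.2 * L z.1.2 z.2)
      ((μ.prod μ).prod γ) :=
    (hL.comp_measurePreserving hp1).integrable_mul (hL.comp_measurePreserving hp2)
  have hsq : ∀ b, (∫ a, L a b ∂μ) ^ 2 = ∫ q : A × A, L q.1 b * L q.2 b ∂(μ.prod μ) := fun b => by
    rw [integral_prod_mul (fun a => L a b) (fun a => L a b), pow_two]
  refine ⟨(memLp_two_iff_integrable_sq hsm.aestronglyMeasurable).2 ?_, ?_⟩
  · simp_rw [hsq]
    exact h_integrable.integral_prod_right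
  · simp_rw [hsq]
    rw [← integral_integral_swap (f := fun (q : A × A) b => L q.1 b * L q.2 b) h_integrable,
      integral_prod_symm _ h_integrable.integral_prod_left]

/-- The average of `dirRatio` over the first row of a random matrix. -/
noncomputable def avgRatio (s : ℝ) (ν : Measure ℝ) (D : ℕ) {N n : ℕ}
    (μ : Measure (Fin (n + 1) → Fin (n + 1) → ℝ)) (Y : Fin N → Fin (n + 1) → ℝ) : ℝ :=
  ∫ Q, dirRatio s ν D (Q 0) Y ∂μ

lemma integral_avgRatio_sq (s : ℝ≥0) (ν : Measure ℝ) (D N : ℕ) {n : ℕ}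
    (μ : Measure (Fin (n + 1) → Fin (n + 1) → ℝ)) [IsProbabilityMeasure μ]
    (horth : ∀ᵐ Q ∂μ, (Matrix.of Q)ᵀ * Matrix.of Q = 1) :
    MemLp (avgRatio (N := N) s ν D μ) 2 (gaussMat N (n + 1) s) ∧
    ∫ Y, avgRatio (N := N) s ν D μ Y ^ 2 ∂(gaussMat N (n + 1) s)
      = ∫ Q', ∫ Q, ∑ α ∈ multiIdx D N, (∏ i, hermiteWeight s ν (α i)) *
          (Q 0 ⬝ᵥ Q' 0) ^ (∑ i, α i) ∂μ ∂μ := by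
  obtain ⟨h1, h2⟩ := memLp_integral_left_of_prod μ (gaussMat N (n + 1) s)
    (fun Q Y => dirRatio s ν D (Q 0) Y) (continuous_dirRatio_row s ν D).stronglyMeasurable
    (memLp_dirRatio_row s ν D N μ horth)
  refine ⟨h1, h2.trans (integral_congr_ae ?_)⟩
  filter_upwards [horth] with Q' hQ'
  refine integral_congr_ae ?_
  filter_upwards [horth] with Q hQ
  exact (integral_dirRatio_mul_dirRatio ν s D (Q 0) (Q' 0)
    (row_dotProduct_self_of_orthogonal hQ 0) (row_dotProduct_self_of_orthogonal hQ' 0)).2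

lemma integrable_row_dotProduct_pow {n : ℕ}
    (μ : Measure (Fin (n + 1) → Fin (n + 1) → ℝ)) [IsProbabilityMeasure μ]
    (horth : ∀ᵐ Q ∂μ, (Matrix.of Q)ᵀ * Matrix.of Q = 1) (d : ℕ) :
    Integrable (fun q : (Fin (n + 1) → Fin (n + 1) → ℝ) × (Fin (n + 1) → Fin (n + 1) → ℝ) =>
      (q.1 0 ⬝ᵥ q.2 0) ^ d) (μ.prod μ) := by
  have hc : Continuous fun q : (Fin (n + 1) → Fin (n + 1) → ℝ) ×
      (Fin (n + 1) → Fin (n + 1) → ℝ) => (q.1 0 ⬝ᵥ q.2 0) ^ d := by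
    unfold dotProduct
    fun_prop
  refine Integrable.of_bound hc.aestronglyMeasurable 1 ?_
  filter_upwards [Measure.quasiMeasurePreserving_fst.ae horth,
    Measure.quasiMeasurePreserving_snd.ae horth] with q h1 h2
  have h1 := row_dotProduct_self_of_orthogonal h1 0
  have h2 := row_dotProduct_self_of_orthogonal h2 0
  rw [norm_pow, Real.norm_eq_abs]
  refine pow_le_one₀ (abs_nonneg _) ?_
  have hcs := Finset.sum_mul_sq_le_sq_mul_sq Finset.univ (q.1 0) (q.2 0)
  simp only [dotProduct, ← pow_two] at h1 h2 ⊢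
  rw [h1, h2, one_mul] at hcs
  exact (sq_le_one_iff_abs_le_one _).1 hcs

lemma integral_avgRatio_sq_le (s : ℝ≥0) (ν : Measure ℝ) (h0 : hermiteWeight s ν 0 = 1)
    (D N : ℕ) {n : ℕ}
    (μ : Measure (Fin (n + 1) → Fin (n + 1) → ℝ)) [IsProbabilityMeasure μ]
    (horth : ∀ᵐ Q ∂μ, (Matrix.of Q)ᵀ * Matrix.of Q = 1)
    (hinv : ∀ R : Matrix (Fin (n + 1)) (Fin (n + 1)) ℝ, Rᵀ * R = 1 →
      Measure.map (fun Q => fun i j => (R * Matrix.of Q) i j) μ = μ) :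
    ∫ Y, avgRatio (N := N) s ν D μ Y ^ 2 ∂(gaussMat N (n + 1) s)
      ≤ 4 * (∑ k ∈ Finset.range (D + 1),
          hermiteWeight s ν k * (D / √(n + 1 : ℕ)) ^ k) ^ N - 3 := by
  have hw : ∀ k, 0 ≤ hermiteWeight s ν k := fun k => by unfold hermiteWeight; positivity
  have hn : (0 : ℝ) < √(n + 1 : ℕ) := by positivity
  set τ : ℝ := D / √(n + 1 : ℕ) with hτ
  have hτ0 : 0 ≤ τ := by positivity
  have h_integrable := fun d => integrable_row_dotProduct_pow μ horth d
  have hterm : ∀ d, d ≤ D → ∫ Q', ∫ Q, (Q 0 ⬝ᵥ Q' 0) ^ d ∂μ ∂μ ≤ 4 * τ ^ d := by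
    intro d hd
    calc ∫ Q', ∫ Q, (Q 0 ⬝ᵥ Q' 0) ^ d ∂μ ∂μ ≤ ∫ _Q', 4 * τ ^ d ∂μ := by
          refine integral_mono_ae (h_integrable d).integral_prod_right (integrable_const _) ?_
          filter_upwards [horth] with Q' hQ'
          have h := abs_integral_row_dotProduct_pow_le μ horth hinv (Q' 0)
            (row_dotProduct_self_of_orthogonal hQ' 0) d
          have hfac : (d.factorial : ℝ) ≤ (D : ℝ) ^ d := by
            exact_mod_cast (Nat.factorial_le_pow d).trans (Nat.pow_le_pow_left hd d)
          rw [hτ, div_pow, ← mul_div_assoc, le_div_iff₀ (by positivity)]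
          refine (mul_le_mul_of_nonneg_right (le_abs_self _) (by positivity)).trans (h.trans ?_)
          gcongr
      _ = _ := by simp
  rw [(integral_avgRatio_sq s ν D N μ horth).2]
  have hswap : ∫ Q', ∫ Q, ∑ α ∈ multiIdx D N, (∏ i, hermiteWeight s ν (α i)) *
          (Q 0 ⬝ᵥ Q' 0) ^ (∑ i, α i) ∂μ ∂μ
      = ∑ α ∈ multiIdx D N, (∏ i, hermiteWeight s ν (α i)) *
        ∫ Q', ∫ Q, (Q 0 ⬝ᵥ Q' 0) ^ (∑ i, α i) ∂μ ∂μ := by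
    rw [← integral_prod_symm (fun q : (Fin (n + 1) → Fin (n + 1) → ℝ) ×
      (Fin (n + 1) → Fin (n + 1) → ℝ) => ∑ α ∈ multiIdx D N,
        (∏ i, hermiteWeight s ν (α i)) * (q.1 0 ⬝ᵥ q.2 0) ^ (∑ i, α i))
      (integrable_finsetSum _ fun α _ => (h_integrable _).const_mul _),
      integral_finsetSum _ fun α _ => (h_integrable _).const_mul _]
    refine Finset.sum_congr rfl fun α _ => ?_
    rw [integral_const_mul, integral_prod_symm _ (h_integrable _)]
  rw [hswap]
  have hmem : (0 : Fin N → ℕ) ∈ multiIdx D N := by simp [multiIdx]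
  calc ∑ α ∈ multiIdx D N, (∏ i, hermiteWeight s ν (α i)) *
        ∫ Q', ∫ Q, (Q 0 ⬝ᵥ Q' 0) ^ (∑ i, α i) ∂μ ∂μ
      ≤ ∑ α ∈ multiIdx D N, ((∏ i, hermiteWeight s ν (α i)) * (4 * τ ^ (∑ i, α i))
          - if α = 0 then 3 else 0) := by
        refine Finset.sum_le_sum fun α hα => ?_
        split_ifs with h
        · subst h
          simp [h0]
          norm_num
        · rw [sub_zero]
          refine mul_le_mul_of_nonneg_left (hterm _ ?_) (Finset.prod_nonneg fun i _ => hw _)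
          exact (Finset.mem_filter.1 hα).2
    _ = 4 * ∑ α ∈ multiIdx D N, ∏ i, (hermiteWeight s ν (α i) * τ ^ α i) - 3 := by
        rw [Finset.sum_sub_distrib, Finset.sum_ite_eq' _ _ _, if_pos hmem, Finset.mul_sum]
        congr 1
        refine Finset.sum_congr rfl fun α _ => ?_
        rw [Finset.prod_mul_distrib, Finset.prod_pow_eq_pow_sum]
        ring
    _ ≤ 4 * ∑ α ∈ Fintype.piFinset fun _ : Fin N => Finset.range (D + 1),
          ∏ i, (hermiteWeight s ν (α i) * τ ^ α i) - 3 := by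
        have hsub : multiIdx D N ⊆ Fintype.piFinset fun _ : Fin N => Finset.range (D + 1) :=
          Finset.filter_subset _ _
        refine sub_le_sub_right (mul_le_mul_of_nonneg_left
          (Finset.sum_le_sum_of_subset_of_nonneg hsub fun α _ _ => ?_) (by norm_num)) _
        exact Finset.prod_nonneg fun i _ => mul_nonneg (hw _) (pow_nonneg hτ0 _)
    _ = _ := by
        rw [← Finset.prod_univ_sum (fun _ => Finset.range (D + 1))
          fun _ k => hermiteWeight s ν k * τ ^ k]
        simp

lemma integrable_brMeasure (N : ℕ) (ρ : ℝ) (g : ℝ → ℝ) : Integrable g (brMeasure N ρ) := by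
  unfold brMeasure
  have h : ∀ (c : ℝ≥0) (a : ℝ), Integrable g (c • Measure.dirac a) := fun c a =>
    (integrable_dirac (by simp)).smul_measure_nnreal
  exact ((h _ _).add_measure (h _ _)).add_measure (h _ _)

lemma integral_brMeasure (N : ℕ) {ρ : ℝ} (hρ : 0 < ρ) (hρ1 : ρ ≤ 1) (g : ℝ → ℝ) :
    ∫ x, g x ∂(brMeasure N ρ) = (1 - ρ) * g 0 + ρ / 2 * g (√(N * ρ))⁻¹
      + ρ / 2 * g (-(√(N * ρ))⁻¹) := by
  unfold brMeasure
  have h : ∀ (c : ℝ≥0) (a : ℝ), Integrable g (c • Measure.dirac a) := fun c a =>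
    (integrable_dirac (by simp)).smul_measure_nnreal
  rw [integral_add_measure ((h _ _).add_measure (h _ _)) (h _ _),
    integral_add_measure (h _ _) (h _ _)]
  simp only [integral_smul_nnreal_measure, integral_dirac, NNReal.smul_def, smul_eq_mul]
  rw [Real.coe_toNNReal _ (by linarith), Real.coe_toNNReal _ (by linarith)]

lemma hermiteWeight_nonneg {s : ℝ} (hs : 0 ≤ s) (ν : Measure ℝ) (k : ℕ) :
    0 ≤ hermiteWeight s ν k := by
  unfold hermiteWeight
  positivity

lemma hermiteWeight_brMeasure_zero (N : ℕ) {ρ : ℝ} (hρ : 0 < ρ) (hρ1 : ρ ≤ 1) (s : ℝ) :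
    hermiteWeight s (brMeasure N ρ) 0 = 1 := by
  simp only [hermiteWeight, hermiteCoeff, integral_brMeasure N hρ hρ1, hermiteVar]
  have : 1 - ρ + ρ / 2 + ρ / 2 = 1 := by ring
  simp [this]

lemma hermiteWeight_brMeasure_eq_zero {N : ℕ} (hN : 0 < N) {ρ : ℝ} (hρ : 0 < ρ) (hρ1 : ρ ≤ 1)
    {k : ℕ} (hk : 1 ≤ k) (hk3 : k ≤ 3) :
    hermiteWeight (N : ℝ)⁻¹ (brMeasure N ρ) k = 0 := by
  have hx : ((√(N * ρ))⁻¹) ^ 2 = (N * ρ)⁻¹ := by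
    rw [inv_pow, Real.sq_sqrt (by positivity)]
  have hN' : (0 : ℝ) < N := by exact_mod_cast hN
  have : ∫ x, (hermiteVar (N : ℝ)⁻¹ k).eval x ∂(brMeasure N ρ) = 0 := by
    rw [integral_brMeasure N hρ hρ1]
    interval_cases k
    · simp [hermiteVar]
    · simp only [hermiteVar, Polynomial.eval_sub, Polynomial.eval_mul, Polynomial.eval_X,
        Polynomial.eval_C, Polynomial.eval_one]
      have h : ∀ c x s : ℝ, (1 - c) * (0 * 0 - s * ((0 : ℕ) + 1) * 1)
          + c / 2 * (x * x - s * ((0 : ℕ) + 1) * 1)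
          + c / 2 * (-x * -x - s * ((0 : ℕ) + 1) * 1) = c * x ^ 2 - s := by
        intros; push_cast; ring
      rw [h, hx]
      field_simp
      ring
    · simp only [hermiteVar, Polynomial.eval_sub, Polynomial.eval_mul, Polynomial.eval_X,
        Polynomial.eval_C, Polynomial.eval_one]
      ring
  simp [hermiteWeight, hermiteCoeff, this]

lemma hermiteWeight_brMeasure_le {N : ℕ} (hN : 0 < N) {ρ : ℝ} (hρ : 0 < ρ) (hρ1 : ρ ≤ 1)
    {k : ℕ} (hk : 2 ≤ k) :
    hermiteWeight (N : ℝ)⁻¹ (brMeasure N ρ) k ≤ 4 * k.factorial * ρ ^ 2 * (ρ⁻¹) ^ k := by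
  have hN' : (0 : ℝ) < N := by exact_mod_cast hN
  set x := (√(N * ρ))⁻¹ with hxd
  have hx0 : 0 < x := by positivity
  have hx : x ^ 2 = (N : ℝ)⁻¹ * ρ⁻¹ := by
    rw [hxd, inv_pow, Real.sq_sqrt (by positivity), mul_inv]
  set s := (N : ℝ)⁻¹ with hsd
  have hs : 0 < s := by positivity
  have hsx : s ≤ x ^ 2 := by
    rw [hx]
    exact le_mul_of_one_le_right hs.le (one_le_inv_iff₀.2 ⟨hρ, hρ1⟩)
  have hss : √s = √ρ * x := by
    rw [← Real.sqrt_sq hx0.le, ← Real.sqrt_mul hρ.le, hx]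
    congr 1
    field_simp
  have h0 : |(hermiteVar s k).eval 0| ≤ k.factorial * (ρ * x ^ k) := by
    refine (abs_eval_hermiteVar_le hs.le (Real.sqrt_nonneg s) (Real.sq_sqrt hs.le).ge
      (by simp) k).trans ?_
    rw [hss, mul_pow]
    gcongr
    calc √ρ ^ k ≤ √ρ ^ 2 :=
          pow_le_pow_of_le_one (Real.sqrt_nonneg _) (Real.sqrt_le_one.2 hρ1) hk
      _ = ρ := Real.sq_sqrt hρ.le
  have h1 := abs_eval_hermiteVar_le hs.le hx0.le hsx (y := x) (abs_of_pos hx0).le k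
  have h2 := abs_eval_hermiteVar_le hs.le hx0.le hsx (y := -x) (by simp [abs_of_pos hx0]) k
  have hraw : |∫ y, (hermiteVar s k).eval y ∂(brMeasure N ρ)| ≤ 2 * k.factorial * ρ * x ^ k := by
    rw [integral_brMeasure N hρ hρ1]
    refine (abs_add_three _ _ _).trans ?_
    rw [abs_mul, abs_mul, abs_mul, abs_of_nonneg (by linarith : 0 ≤ 1 - ρ),
      abs_of_nonneg (by linarith : 0 ≤ ρ / 2)]
    calc _ ≤ 1 * (k.factorial * (ρ * x ^ k)) + ρ / 2 * (k.factorial * x ^ k)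
          + ρ / 2 * (k.factorial * x ^ k) := by
          gcongr
          linarith
      _ = _ := by ring
  have hsq := sq_le_sq' (abs_le.1 hraw).1 (abs_le.1 hraw).2
  have hk0 : (0 : ℝ) < k.factorial := by positivity
  calc hermiteWeight s (brMeasure N ρ) k
      = (∫ y, (hermiteVar s k).eval y ∂(brMeasure N ρ)) ^ 2 / (k.factorial * s ^ k) := by
        rw [hermiteWeight, hermiteCoeff]
        field_simp
    _ ≤ (2 * k.factorial * ρ * x ^ k) ^ 2 / (k.factorial * s ^ k) := by gcongr
    _ = 4 * k.factorial * ρ ^ 2 * (x ^ 2 / s) ^ k := by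
        rw [div_pow]
        field_simp
        ring
    _ = _ := by
        rw [hx]
        congr 2
        field_simp

lemma integral_prod_prod_eq {V A B : Type*} [MeasurableSpace V] [MeasurableSpace A]
    [MeasurableSpace B] (ν : Measure V) (μ : Measure A) (γ : Measure B) [SFinite ν] [SFinite μ]
    [SFinite γ] (F : V × A × B → ℝ) (hF : Integrable F (ν.prod (μ.prod γ))) :
    ∫ z, F z ∂(ν.prod (μ.prod γ)) = ∫ a, ∫ y, F (y.1, a, y.2) ∂(ν.prod γ) ∂μ := by
  have hmp : MeasurePreserving (fun z : A × V × B => (z.2.1, z.1, z.2.2))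
      (μ.prod (ν.prod γ)) (ν.prod (μ.prod γ)) :=
    (measurePreserving_prodAssoc ν μ γ).comp
      ((Measure.measurePreserving_swap.prod (MeasurePreserving.id γ)).comp
        (MeasurePreserving.symm _ (measurePreserving_prodAssoc μ ν γ)))
  have hF' := hF
  rw [← hmp.map_eq] at hF' ⊢
  rw [integral_map hmp.measurable.aemeasurable hF'.aestronglyMeasurable]
  exact integral_prod _ ((integrable_map_measure hF'.aestronglyMeasurable
    hmp.measurable.aemeasurable).1 hF')

lemma sq_integral_mul_le {B : Type*} [MeasurableSpace B] (γ : Measure B) (f g : B → ℝ)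
    (hf : MemLp f 2 γ) (hg : MemLp g 2 γ) :
    (∫ b, f b * g b ∂γ) ^ 2 ≤ (∫ b, f b ^ 2 ∂γ) * ∫ b, g b ^ 2 ∂γ := by
  have hfg : Integrable (fun b => f b * g b) γ := hf.integrable_mul hg
  have hff := hf.integrable_sq
  have hgg := hg.integrable_sq
  have h : ∀ c : ℝ, 0 ≤ (∫ b, g b ^ 2 ∂γ) * (c * c) + (-2 * ∫ b, f b * g b ∂γ) * c
      + ∫ b, f b ^ 2 ∂γ := by
    intro c
    have h0 : 0 ≤ ∫ b, (c * g b - f b) ^ 2 ∂γ := integral_nonneg fun b => sq_nonneg _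
    have h1 : ∫ b, (c * g b - f b) ^ 2 ∂γ
        = ∫ b, ((c * c) * g b ^ 2 + (-2 * c) * (f b * g b) + f b ^ 2) ∂γ :=
      integral_congr_ae (.of_forall fun b => by ring)
    have h2 := integral_add (hgg.const_mul (c * c)) (hfg.const_mul (-2 * c))
    have h3 := integral_add ((hgg.const_mul (c * c)).add (hfg.const_mul (-2 * c))) hff
    simp only [Pi.add_apply] at h3
    rw [h1, h3, h2, integral_const_mul, integral_const_mul] at h0
    linarith
  have := discrim_le_zero h
  rw [discrim] at this
  nlinarith

lemma integral_integral_mul_eq {A B : Type*} [MeasurableSpace A] [MeasurableSpace B]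
    (μ : Measure A) (γ : Measure B) [IsProbabilityMeasure μ] [IsProbabilityMeasure γ]
    (f : B → ℝ) (L : A → B → ℝ) (hf : MemLp f 2 γ)
    (hL : MemLp (Function.uncurry L) 2 (μ.prod γ)) :
    ∫ a, ∫ b, f b * L a b ∂γ ∂μ = ∫ b, f b * ∫ a, L a b ∂μ ∂γ := by
  have h_integrable : Integrable (Function.uncurry fun a b => f b * L a b) (μ.prod γ) :=
    (hf.comp_measurePreserving measurePreserving_snd).integrable_mul hL
  rw [integral_integral_swap h_integrable]
  simp_rw [integral_const_mul]

lemma integral_integral_planted_eq {ν : Measure ℝ} [SigmaFinite ν]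
    (hν : ∀ k : ℕ, Integrable (fun x : ℝ => x ^ k) ν) (s : ℝ≥0) (hs : s ≠ 0) {D N n : ℕ}
    (μ : Measure (Fin (n + 1) → Fin (n + 1) → ℝ))
    (horth : ∀ᵐ Q ∂μ, (Matrix.of Q)ᵀ * Matrix.of Q = 1)
    (f : MvPolynomial (Fin N × Fin (n + 1)) ℝ) (hf : f.totalDegree ≤ D) :
    ∫ Q, ∫ y : (Fin N → ℝ) × (Fin N → Fin n → ℝ), MvPolynomial.eval (fun q =>
        ((Fin.cons (y.1 q.1) (y.2 q.1) : Fin (n + 1) → ℝ) ᵥ* Matrix.of Q) q.2) f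
        ∂((Measure.pi fun _ => ν).prod (gaussMat N n s)) ∂μ
      = ∫ Q, ∫ Y, MvPolynomial.eval (fun q => Y q.1 q.2) f * dirRatio s ν D (Q 0) Y
        ∂(gaussMat N (n + 1) s) ∂μ := by
  refine integral_congr_ae ?_
  filter_upwards [horth] with Q hQ
  exact (integral_planted_mul_eq hν s hs (Matrix.of Q) (mul_eq_one_comm.1 hQ) f hf).2

lemma sq_integral_integral_mul_dirRatio_le {ν : Measure ℝ} (s : ℝ≥0) {D N n : ℕ}
    (μ : Measure (Fin (n + 1) → Fin (n + 1) → ℝ)) [IsProbabilityMeasure μ]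
    (horth : ∀ᵐ Q ∂μ, (Matrix.of Q)ᵀ * Matrix.of Q = 1)
    (f : MvPolynomial (Fin N × Fin (n + 1)) ℝ) :
    (∫ Q, ∫ Y, MvPolynomial.eval (fun q => Y q.1 q.2) f * dirRatio s ν D (Q 0) Y
        ∂(gaussMat N (n + 1) s) ∂μ) ^ 2
      ≤ (∫ Y, MvPolynomial.eval (fun q => Y q.1 q.2) f ^ 2 ∂(gaussMat N (n + 1) s))
        * ∫ Y, avgRatio (N := N) s ν D μ Y ^ 2 ∂(gaussMat N (n + 1) s) := by
  have hf := memLp_eval_gaussMat s f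
  have hL : MemLp (Function.uncurry fun (Q : Fin (n + 1) → Fin (n + 1) → ℝ)
      (Y : Fin N → Fin (n + 1) → ℝ) => dirRatio s ν D (Q 0) Y) 2
      (μ.prod (gaussMat N (n + 1) s)) := memLp_dirRatio_row s ν D N μ horth
  have h1 := integral_integral_mul_eq μ (gaussMat N (n + 1) s) _ _ hf hL
  have h2 := sq_integral_mul_le (gaussMat N (n + 1) s) _ _ hf
    (integral_avgRatio_sq s ν D N μ horth).1
  simp only [avgRatio] at h2 ⊢
  rw [← h1] at h2
  exact h2

lemma integral_planted_haar_le {ν : Measure ℝ} [SigmaFinite ν]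
    (hν : ∀ k : ℕ, Integrable (fun x : ℝ => x ^ k) ν) (s : ℝ≥0) (hs : s ≠ 0) {D N n : ℕ}
    (μ : Measure (Fin (n + 1) → Fin (n + 1) → ℝ)) [IsProbabilityMeasure μ]
    (horth : ∀ᵐ Q ∂μ, (Matrix.of Q)ᵀ * Matrix.of Q = 1)
    (f : MvPolynomial (Fin N × Fin (n + 1)) ℝ) (hf : f.totalDegree ≤ D)
    (hM : ∫ Y, avgRatio (N := N) s ν D μ Y ^ 2 ∂(gaussMat N (n + 1) s) ≤ 4) :
    ∫ z : (Fin N → ℝ) × (Fin (n + 1) → Fin (n + 1) → ℝ) × (Fin N → Fin n → ℝ),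
        MvPolynomial.eval (fun q => ((Fin.cons (z.1 q.1) (z.2.2 q.1) : Fin (n + 1) → ℝ)
          ᵥ* Matrix.of z.2.1) q.2) f
        ∂((Measure.pi fun _ => ν).prod (μ.prod (gaussMat N n s)))
      ≤ 2 * √(∫ Y, MvPolynomial.eval (fun q => Y q.1 q.2) f ^ 2 ∂(gaussMat N (n + 1) s)) := by
  by_cases hF : Integrable (fun z : (Fin N → ℝ) × (Fin (n + 1) → Fin (n + 1) → ℝ) ×
      (Fin N → Fin n → ℝ) => MvPolynomial.eval (fun q =>
        ((Fin.cons (z.1 q.1) (z.2.2 q.1) : Fin (n + 1) → ℝ) ᵥ* Matrix.of z.2.1) q.2) f)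
        ((Measure.pi fun _ => ν).prod (μ.prod (gaussMat N n s)))
  swap
  · rw [integral_undef hF]
    positivity
  rw [integral_prod_prod_eq _ _ _ _ hF]
  rw [integral_integral_planted_eq hν s hs μ horth f hf]
  have hA : 0 ≤ ∫ Y, MvPolynomial.eval (fun q => Y q.1 q.2) f ^ 2 ∂(gaussMat N (n + 1) s) :=
    integral_nonneg fun _ => sq_nonneg _
  refine (abs_le_of_sq_le_sq' ?_ (by positivity)).2
  rw [mul_pow, Real.sq_sqrt hA]
  refine (sq_integral_integral_mul_dirRatio_le s μ horth f).trans ?_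
  nlinarith

lemma rowCat_eq_cons {n : ℕ} (a : ℝ) (b : Fin n → ℝ) :
    rowCat (n := n + 1) a b = Fin.cons a b := by
  ext j
  refine Fin.cases ?_ (fun i => ?_) j
  · simp [rowCat]
  · simp [rowCat]

lemma planted_advantage_le {N n : ℕ} {ρ : ℝ} (hN : 0 < N)
    (μ : Measure (Fin (n + 1) → Fin (n + 1) → ℝ)) [IsProbabilityMeasure μ]
    (horth : ∀ᵐ Q ∂μ, (Matrix.of Q)ᵀ * Matrix.of Q = 1) {D : ℕ}
    (hν : ∀ k : ℕ, Integrable (fun x : ℝ => x ^ k) (brMeasure N ρ))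
    (f : MvPolynomial (Fin N × Fin (n + 1)) ℝ) (hf : f.totalDegree ≤ D)
    (hM : ∫ Y, avgRatio (N := N) ((N : ℝ≥0)⁻¹ : ℝ≥0) (brMeasure N ρ) D μ Y ^ 2
      ∂(gaussMat N (n + 1) (N : ℝ≥0)⁻¹) ≤ 4) :
    (∫ Y, MvPolynomial.eval (fun q => Y q.1 q.2) f
        ∂(Measure.map
          (fun w : (Fin N → ℝ) × (Fin (n + 1) → Fin (n + 1) → ℝ) × (Fin N → Fin (n + 1 - 1) → ℝ) =>
            fun i j => (gaussBasis w.1 w.2.2 * Matrix.of w.2.1) i j)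
          ((brVec N ρ).prod (μ.prod (iidGaussVec N (n + 1 - 1) ((N : NNReal))⁻¹)))))
      / Real.sqrt (∫ Y, (MvPolynomial.eval (fun q => Y q.1 q.2) f) ^ 2
        ∂(Measure.pi fun _ : Fin N =>
            (Measure.pi fun _ : Fin (n + 1) => gaussianReal 0 ((N : NNReal))⁻¹))) ≤ 2 := by
  have hs : (N : ℝ≥0)⁻¹ ≠ 0 := inv_ne_zero (by exact_mod_cast hN.ne')
  have hmain := integral_planted_haar_le hν (N : ℝ≥0)⁻¹ hs μ horth f hf hM
  have hm : Continuous fun w : (Fin N → ℝ) × (Fin (n + 1) → Fin (n + 1) → ℝ) ×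
      (Fin N → Fin n → ℝ) => fun i j =>
        ((Fin.cons (w.1 i) (w.2.2 i) : Fin (n + 1) → ℝ) ᵥ* Matrix.of w.2.1) j := by
    refine continuous_pi fun i => continuous_pi fun j => ?_
    simp only [vecMul, dotProduct, Matrix.of_apply, Fin.sum_univ_succ, Fin.cons_zero,
      Fin.cons_succ]
    fun_prop
  have hfun : (fun w : (Fin N → ℝ) × (Fin (n + 1) → Fin (n + 1) → ℝ) ×
      (Fin N → Fin n → ℝ) => fun i j => (gaussBasis (n := n + 1) w.1 w.2.2 * Matrix.of w.2.1) i j)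
      = fun w => fun i j =>
        ((Fin.cons (w.1 i) (w.2.2 i) : Fin (n + 1) → ℝ) ᵥ* Matrix.of w.2.1) j := by
    funext w i j
    rw [← rowCat_eq_cons]
    rfl
  refine div_le_of_le_mul₀ (Real.sqrt_nonneg _) zero_le_two ?_
  refine le_trans (le_of_eq ?_) hmain
  change ∫ Y, MvPolynomial.eval (fun q => Y q.1 q.2) f
    ∂(Measure.map (fun w : (Fin N → ℝ) × (Fin (n + 1) → Fin (n + 1) → ℝ) ×
      (Fin N → Fin n → ℝ) => fun i j => (gaussBasis (n := n + 1) w.1 w.2.2 * Matrix.of w.2.1) i j)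
      ((Measure.pi fun _ => brMeasure N ρ).prod (μ.prod (gaussMat N n (N : ℝ≥0)⁻¹)))) = _
  rw [hfun]
  exact integral_map hm.aemeasurable (continuous_eval_matrix f).aestronglyMeasurable

lemma sum_weight_mul_pow_le {lam : ℕ → ℝ} {ρ τ : ℝ} (D : ℕ) (hρ : 0 < ρ) (hτ : 0 ≤ τ)
    (h0 : lam 0 = 1) (h3 : ∀ k, 1 ≤ k → k ≤ 3 → lam k = 0)
    (hle : ∀ k, 2 ≤ k → lam k ≤ 4 * k.factorial * ρ ^ 2 * (ρ⁻¹) ^ k)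
    (hr : D * τ / ρ ≤ 1 / 2) :
    ∑ k ∈ Finset.range (D + 1), lam k * τ ^ k ≤ 1 + 8 * ρ ^ 2 * (D * τ / ρ) ^ 4 := by
  set r := D * τ / ρ with hrd
  have hr0 : 0 ≤ r := by positivity
  have hterm : ∀ k ∈ Finset.range (D + 1), lam k * τ ^ k
      ≤ (if k = 0 then 1 else 0) + 4 * ρ ^ 2 * r ^ 4 * (if 4 ≤ k then (1 / 2) ^ (k - 4) else 0) := by
    intro k hk
    rcases Nat.lt_or_ge k 4 with h | h
    · rcases Nat.eq_zero_or_pos k with rfl | hk0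
      · simp [h0]
      · rw [h3 k hk0 (by omega), if_neg (by omega), if_neg (by omega)]
        simp
    · rw [if_neg (by omega), if_pos h, zero_add]
      have hfac : (k.factorial : ℝ) ≤ (D : ℝ) ^ k := by
        have : k ≤ D := by simpa [Nat.lt_succ_iff] using hk
        exact_mod_cast (Nat.factorial_le_pow k).trans (Nat.pow_le_pow_left this k)
      calc lam k * τ ^ k ≤ 4 * k.factorial * ρ ^ 2 * (ρ⁻¹) ^ k * τ ^ k := by
            gcongr
            exact hle k (by omega)
        _ ≤ 4 * (D : ℝ) ^ k * ρ ^ 2 * (ρ⁻¹) ^ k * τ ^ k := by gcongr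
        _ = 4 * ρ ^ 2 * (r ^ 4 * r ^ (k - 4)) := by
            rw [← pow_add, Nat.add_sub_cancel' h, hrd, div_eq_mul_inv, mul_pow, mul_pow]
            ring
        _ ≤ 4 * ρ ^ 2 * (r ^ 4 * (1 / 2) ^ (k - 4)) := by gcongr
        _ = _ := by ring
  have hgeom : ∑ k ∈ Finset.range (D + 1), (if 4 ≤ k then (1 / 2 : ℝ) ^ (k - 4) else 0) ≤ 2 := by
    calc _ ≤ ∑ k ∈ Finset.range (4 + (D + 1)), (if 4 ≤ k then (1 / 2 : ℝ) ^ (k - 4) else 0) := by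
          refine Finset.sum_le_sum_of_subset_of_nonneg (fun k hk => ?_) fun k _ _ => ?_
          · simp only [Finset.mem_range] at hk ⊢
            omega
          · split_ifs <;> positivity
      _ = ∑ k ∈ Finset.range (D + 1), (1 / 2 : ℝ) ^ k := by
          rw [Finset.sum_range_add]
          simp [Finset.sum_range_succ]
      _ ≤ 2 := sum_geometric_two_le _
  refine (Finset.sum_le_sum hterm).trans ?_
  rw [Finset.sum_add_distrib, ← Finset.mul_sum, Finset.sum_ite_eq', if_pos (by simp)]
  have := mul_le_mul_of_nonneg_left hgeom (by positivity : 0 ≤ 4 * ρ ^ 2 * r ^ 4)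
  linarith

lemma four_mul_sum_weight_pow_le {lam : ℕ → ℝ} {ρ L : ℝ} {D N n : ℕ} (hρ : 0 < ρ) (hn : 0 < n)
    (hnN : n ≤ N) (h0 : lam 0 = 1) (h3 : ∀ k, 1 ≤ k → k ≤ 3 → lam k = 0)
    (hlam : ∀ k, 0 ≤ lam k)
    (hle : ∀ k, 2 ≤ k → lam k ≤ 4 * k.factorial * ρ ^ 2 * (ρ⁻¹) ^ k)
    (hL : 0 < L) (hDL : 8 * (D : ℝ) ^ 4 ≤ L) (hNL : √N * L ≤ n * ρ) :
    4 * (∑ k ∈ Finset.range (D + 1), lam k * (D / √n) ^ k) ^ N - 3 ≤ 4 := by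
  have hn' : (0 : ℝ) < n := by exact_mod_cast hn
  have hN' : (0 : ℝ) < N := by exact_mod_cast hn.trans_le hnN
  have hsn : 0 < √(n : ℝ) := Real.sqrt_pos.2 hn'
  have hsN : √(n : ℝ) ≤ √N := Real.sqrt_le_sqrt (by exact_mod_cast hnN)
  have hLρ : L ≤ √n * ρ := by
    refine le_of_mul_le_mul_left ?_ hsn
    calc √n * L ≤ √N * L := by gcongr
      _ ≤ n * ρ := hNL
      _ = √n * (√n * ρ) := by rw [← mul_assoc, Real.mul_self_sqrt hn'.le]
  have hD24 : (D : ℝ) ^ 2 ≤ (D : ℝ) ^ 4 := by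
    rcases Nat.eq_zero_or_pos D with rfl | hD
    · simp
    · exact pow_le_pow_right₀ (by exact_mod_cast hD) (by norm_num)
  have hreq : (D : ℝ) * (D / √n) / ρ = (D : ℝ) ^ 2 / (√n * ρ) := by
    field_simp
  have hr : (D : ℝ) * (D / √n) / ρ ≤ 1 / 2 := by
    rw [hreq, div_le_iff₀ (by positivity)]
    have : 0 ≤ (D : ℝ) ^ 4 := by positivity
    linarith
  have hS := sum_weight_mul_pow_le (lam := lam) (τ := D / √n) D hρ (by positivity) h0 h3 hle hr
  have hsmall : (N : ℝ) * (8 * ρ ^ 2 * ((D : ℝ) * (D / √n) / ρ) ^ 4) ≤ 1 / 8 := by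
    have h4 : √(n : ℝ) ^ 4 = (n : ℝ) ^ 2 := by
      rw [show 4 = 2 * 2 by norm_num, pow_mul, Real.sq_sqrt hn'.le]
    have heq : (N : ℝ) * (8 * ρ ^ 2 * ((D : ℝ) * (D / √n) / ρ) ^ 4)
        = 8 * (N * ((D : ℝ) ^ 4) ^ 2) / (n * ρ) ^ 2 := by
      rw [hreq, div_pow, mul_pow, h4]
      field_simp
    have h1 : (√N * L) ^ 2 ≤ (n * ρ) ^ 2 := by gcongr
    rw [mul_pow, Real.sq_sqrt hN'.le] at h1
    have h2 : (8 * (D : ℝ) ^ 4) ^ 2 ≤ L ^ 2 := by gcongr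
    rw [heq, div_le_iff₀ (by positivity)]
    nlinarith [mul_le_mul_of_nonneg_left h2 hN'.le]
  have hpos : 0 ≤ ∑ k ∈ Finset.range (D + 1), lam k * (D / √(n : ℝ)) ^ k :=
    Finset.sum_nonneg fun k _ => mul_nonneg (hlam k) (by positivity)
  have hexp : (∑ k ∈ Finset.range (D + 1), lam k * (D / √(n : ℝ)) ^ k) ^ N ≤ Real.exp (1 / 8) := by
    refine (pow_le_pow_left₀ hpos
      (hS.trans (c := Real.exp (8 * ρ ^ 2 * ((D : ℝ) * (D / √n) / ρ) ^ 4)) ?_) N).trans ?_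
    · rw [add_comm]
      exact Real.add_one_le_exp _
    · rw [← Real.exp_nat_mul]
      exact Real.exp_le_exp.2 hsmall
  have h8 : Real.exp (1 / 8) ≤ 7 / 4 := by
    have := Real.exp_bound_div_one_sub_of_interval (x := 1 / 8) (by norm_num) (by norm_num)
    norm_num at this ⊢
    linarith
  linarith

lemma eight_mul_pow_four_le {ℓ C : ℝ} {D : ℕ} (hℓ : 8 ≤ ℓ) (hD : (D : ℝ) ≤ ℓ ^ C) :
    8 * (D : ℝ) ^ 4 ≤ ℓ ^ (4 * C + 1) := by
  have h0 : 0 < ℓ := by linarith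
  have h4 : (D : ℝ) ^ 4 ≤ (ℓ ^ C) ^ 4 := by gcongr
  rw [Real.rpow_add h0, Real.rpow_one, mul_comm 4 C, Real.rpow_mul h0.le]
  have : (ℓ ^ C) ^ (4 : ℝ) = (ℓ ^ C) ^ 4 := by exact_mod_cast Real.rpow_natCast (ℓ ^ C) 4
  rw [this, mul_comm]
  gcongr

/-- low-degree hardness of detection: for the detection problem with null
`𝒬` (i.i.d. `N(0,1/N)` entries) and planted `𝒫` (`Ỹ = YQ`, `v ∼ BR(N,ρ)`, `Q` Haar-uniform
orthogonal, characterized as a probability measure supported on orthogonal matrices and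
left-translation invariant), for any constant `C₁ > 0` there exist a constant `C₂ > 0` and
an absolute `N₀` such that: if `nρ ≥ √N (log N)^{C₂}` and `D ≤ (log N)^{C₁}`, then
`Adv_{≤D} ≤ 2`, i.e. every nonzero polynomial `f` of degree at most `D` in the entries of
`Ỹ` satisfies `𝔼_𝒫[f] / √(𝔼_𝒬[f²]) ≤ 2`. -/
theorem stmt_14 (C₁ : ℝ) (hC₁ : 0 < C₁) :
    ∃ C₂ : ℝ, 0 < C₂ ∧ ∃ N₀ : ℕ,
      ∀ N n : ℕ, ∀ ρ : ℝ, N₀ ≤ N → 1 ≤ n → n ≤ N → 0 < ρ → ρ ≤ 1 →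
        ∀ (μQ : Measure (Fin n → Fin n → ℝ)) [IsProbabilityMeasure μQ],
          (∀ᵐ Q ∂μQ, (Matrix.of Q)ᵀ * Matrix.of Q = 1) →
          (∀ R : Matrix (Fin n) (Fin n) ℝ, Rᵀ * R = 1 →
            Measure.map (fun Q => fun i j => (R * Matrix.of Q) i j) μQ = μQ) →
        ∀ D : ℕ, (D : ℝ) ≤ (Real.log N) ^ C₁ →
          Real.sqrt N * (Real.log N) ^ C₂ ≤ (n : ℝ) * ρ →
          ∀ f : MvPolynomial (Fin N × Fin n) ℝ, f.totalDegree ≤ D → f ≠ 0 →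
            (∫ Y, MvPolynomial.eval (fun q => Y q.1 q.2) f
                ∂(Measure.map
                  (fun w : (Fin N → ℝ) × (Fin n → Fin n → ℝ)
                      × (Fin N → Fin (n - 1) → ℝ) =>
                    fun i j => (gaussBasis w.1 w.2.2 * Matrix.of w.2.1) i j)
                  ((brVec N ρ).prod
                    (μQ.prod (iidGaussVec N (n - 1) ((N : NNReal))⁻¹)))))
              / Real.sqrt (∫ Y, (MvPolynomial.eval (fun q => Y q.1 q.2) f) ^ 2
                ∂(Measure.pi fun _ : Fin N =>
                    (Measure.pi fun _ : Fin n => gaussianReal 0 ((N : NNReal))⁻¹)))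
              ≤ 2 := by

  refine ⟨4 * C₁ + 1, by linarith, ⌈Real.exp 8⌉₊, ?_⟩
  intro N n ρ hN hn hnN hρ hρ1 μQ _ horth hinv D hD hNL f hf _
  obtain ⟨n, rfl⟩ : ∃ m, n = m + 1 := ⟨n - 1, by omega⟩
  have hN0 : 0 < N := by omega
  have hlog : 8 ≤ Real.log N := by
    rw [Real.le_log_iff_exp_le (by exact_mod_cast hN0)]
    exact Nat.ceil_le.1 hN
  have hcoe : (((N : ℝ≥0)⁻¹ : ℝ≥0) : ℝ) = (N : ℝ)⁻¹ := by simp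
  have hbound := four_mul_sum_weight_pow_le
    (lam := hermiteWeight (((N : ℝ≥0)⁻¹ : ℝ≥0) : ℝ) (brMeasure N ρ)) (D := D) hρ hn hnN
    (hermiteWeight_brMeasure_zero N hρ hρ1 _)
    (fun k h1 h3 => by rw [hcoe]; exact hermiteWeight_brMeasure_eq_zero hN0 hρ hρ1 h1 h3)
    (fun k => hermiteWeight_nonneg (NNReal.coe_nonneg _) _ k)
    (fun k hk => by rw [hcoe]; exact hermiteWeight_brMeasure_le hN0 hρ hρ1 hk)
    (Real.rpow_pos_of_pos (by linarith) _) (eight_mul_pow_four_le hlog hD) hNL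
  refine planted_advantage_le hN0 μQ horth (fun k => integrable_brMeasure N ρ _) f hf ?_
  exact (integral_avgRatio_sq_le _ _ (hermiteWeight_brMeasure_zero N hρ hρ1 _) D N μQ
    horth hinv).trans hbound
end

section
/- Fix vectors x, y ∈ ℝ^N and define α := ⟨x, y⟩. Let P ∈ ℝ^{N×N} be the orthogonal projection matrix onto a uniformly random n-dimensional subspace of ℝ^N (1 ≤ n ≤ N). Then there is a universal constant C > 0 such that for every k > 0 there exists N₀ such that for all N ≥ N₀: with probability at least 1 − N^{−k}, |xᵀPy − α·n/N| ≤ ‖x‖·‖y‖·(log N)^C·√n/N. -/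
open MeasureTheory Matrix

/-- The sign `±1` encoded by a Boolean. -/
def boolSign (b : Bool) : ℝ := if b then 1 else -1

theorem boolSign_mul_self (b : Bool) : boolSign b * boolSign b = 1 := by
  cases b <;> simp [boolSign]

/-- The average of a function over the discrete cube. -/
noncomputable def cubeAvg {n : ℕ} (f : (Fin n → Bool) → ℝ) : ℝ := (∑ z, f z) / 2 ^ n

theorem cubeAvg_succ {n : ℕ} (f : (Fin (n + 1) → Bool) → ℝ) :
    cubeAvg f = (cubeAvg (fun z => f (Fin.cons true z)) +
      cubeAvg (fun z => f (Fin.cons false z))) / 2 := by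
  have h : ∑ z, f z = (∑ z, f (Fin.cons true z)) + ∑ z, f (Fin.cons false z) := by
    rw [← (Fin.consEquiv (fun _ : Fin (n + 1) => Bool)).sum_comp, Fintype.sum_prod_type,
      Fintype.sum_bool]
    rfl
  simp only [cubeAvg, h]
  field_simp
  ring

theorem cubeAvg_add {n : ℕ} (f g : (Fin n → Bool) → ℝ) :
    cubeAvg (fun z => f z + g z) = cubeAvg f + cubeAvg g := by
  simp [cubeAvg, Finset.sum_add_distrib, add_div]

theorem cubeAvg_const_mul {n : ℕ} (c : ℝ) (f : (Fin n → Bool) → ℝ) :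
    cubeAvg (fun z => c * f z) = c * cubeAvg f := by
  simp [cubeAvg, ← Finset.mul_sum, mul_div_assoc]

theorem cubeAvg_const {n : ℕ} (c : ℝ) : cubeAvg (fun _ : Fin n → Bool => c) = c := by
  simp [cubeAvg]

theorem cubeAvg_nonneg {n : ℕ} {f : (Fin n → Bool) → ℝ} (hf : ∀ z, 0 ≤ f z) :
    0 ≤ cubeAvg f :=
  div_nonneg (Finset.sum_nonneg fun z _ => hf z) (by positivity)

theorem cubeAvg_mul_sq_le {n : ℕ} (f g : (Fin n → Bool) → ℝ) :
    cubeAvg (fun z => f z * g z) ^ 2 ≤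
      cubeAvg (fun z => f z ^ 2) * cubeAvg (fun z => g z ^ 2) := by
  simp only [cubeAvg, div_pow, div_mul_div_comm, ← sq]
  gcongr
  exact Finset.sum_mul_sq_le_sq_mul_sq _ _ _

theorem cubeAvg_add_sign_mul_sq {n : ℕ} {f : (Fin (n + 1) → Bool) → ℝ}
    {g h : (Fin n → Bool) → ℝ} (hf : ∀ b z, f (Fin.cons b z) = g z + boolSign b * h z) :
    cubeAvg (fun z => f z ^ 2) = cubeAvg (fun z => g z ^ 2) + cubeAvg (fun z => h z ^ 2) := by
  rw [cubeAvg_succ, ← cubeAvg_add, ← cubeAvg_add, div_eq_inv_mul, ← cubeAvg_const_mul]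
  congr 1
  funext z
  simp only [hf, boolSign]
  norm_num
  ring

theorem cubeAvg_add_sign_mul_pow_four {n : ℕ} {f : (Fin (n + 1) → Bool) → ℝ}
    {g h : (Fin n → Bool) → ℝ} (hf : ∀ b z, f (Fin.cons b z) = g z + boolSign b * h z) :
    cubeAvg (fun z => f z ^ 4) = cubeAvg (fun z => g z ^ 4) +
      6 * cubeAvg (fun z => g z ^ 2 * h z ^ 2) + cubeAvg (fun z => h z ^ 4) := by
  rw [cubeAvg_succ, ← cubeAvg_const_mul, ← cubeAvg_add, ← cubeAvg_add, ← cubeAvg_add,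
    div_eq_inv_mul, ← cubeAvg_const_mul]
  congr 1
  funext z
  simp only [hf, boolSign]
  norm_num
  ring

/-- `CubeDegLT n d f` says that `f`, as a function on the discrete cube of dimension `n`,
is given by a multilinear polynomial of degree less than `d` in the signs. -/
def CubeDegLT : ∀ n : ℕ, ℕ → ((Fin n → Bool) → ℝ) → Prop
  | _, 0, f => f = 0
  | 0, _ + 1, _ => True
  | n + 1, d + 1, f => ∃ g h : (Fin n → Bool) → ℝ,
      (∀ b z, f (Fin.cons b z) = g z + boolSign b * h z) ∧
        CubeDegLT n (d + 1) g ∧ CubeDegLT n d h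

theorem CubeDegLT.zero {n d : ℕ} : CubeDegLT n d 0 := by
  induction n generalizing d with
  | zero => cases d <;> simp [CubeDegLT]
  | succ n ih =>
    cases d with
    | zero => simp [CubeDegLT]
    | succ d => exact ⟨0, 0, by simp, ih, ih⟩

theorem CubeDegLT.mono {n d e : ℕ} {f : (Fin n → Bool) → ℝ} (hf : CubeDegLT n d f)
    (hde : d ≤ e) : CubeDegLT n e f := by
  induction n generalizing d e with
  | zero =>
    cases d with
    | zero =>
      have : f = 0 := by simpa [CubeDegLT] using hf
      exact this ▸ CubeDegLT.zero
    | succ d =>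
      obtain ⟨e, rfl⟩ : ∃ e', e = e' + 1 := ⟨e - 1, by omega⟩
      simp [CubeDegLT]
  | succ n ih =>
    cases d with
    | zero =>
      have : f = 0 := by simpa [CubeDegLT] using hf
      exact this ▸ CubeDegLT.zero
    | succ d =>
      obtain ⟨e, rfl⟩ : ∃ e', e = e' + 1 := ⟨e - 1, by omega⟩
      obtain ⟨g, h, hfgh, hg, hh⟩ := hf
      exact ⟨g, h, hfgh, ih hg hde, ih hh (by omega)⟩

theorem CubeDegLT.add {n d : ℕ} {f g : (Fin n → Bool) → ℝ} (hf : CubeDegLT n d f)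
    (hg : CubeDegLT n d g) : CubeDegLT n d (f + g) := by
  induction n generalizing d with
  | zero => cases d <;> simp_all [CubeDegLT]
  | succ n ih =>
    cases d with
    | zero => simp_all [CubeDegLT]
    | succ d =>
      obtain ⟨a, b, hab, ha, hb⟩ := hf
      obtain ⟨a', b', hab', ha', hb'⟩ := hg
      refine ⟨a + a', b + b', fun s z => ?_, ih ha ha', ih hb hb'⟩
      simp only [Pi.add_apply, hab, hab']
      ring

theorem CubeDegLT.mul {n d e : ℕ} {f g : (Fin n → Bool) → ℝ} (hf : CubeDegLT n d f)
    (hg : CubeDegLT n e g) : CubeDegLT n (d + e) (f * g) := by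
  induction n generalizing d e with
  | zero =>
    rcases d with _ | d
    · have : f = 0 := by simpa [CubeDegLT] using hf
      rw [this, zero_mul]
      exact CubeDegLT.zero
    · rw [show d + 1 + e = d + e + 1 by omega]
      simp [CubeDegLT]
  | succ n ih =>
    rcases d with _ | d
    · have : f = 0 := by simpa [CubeDegLT] using hf
      rw [this, zero_mul]
      exact CubeDegLT.zero
    rcases e with _ | e
    · have : g = 0 := by simpa [CubeDegLT] using hg
      rw [this, mul_zero]
      exact CubeDegLT.zero
    obtain ⟨a, b, hab, ha, hb⟩ := hf
    obtain ⟨a', b', hab', ha', hb'⟩ := hg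
    rw [show d + 1 + (e + 1) = d + e + 1 + 1 by omega]
    refine ⟨a * a' + b * b', a * b' + b * a', fun s z => ?_,
      ((ih ha ha').mono (by omega)).add ((ih hb hb').mono (by omega)),
      ((ih ha hb').mono (by omega)).add ((ih hb ha').mono (by omega))⟩
    simp only [Pi.add_apply, Pi.mul_apply, hab, hab']
    linear_combination b z * b' z * boolSign_mul_self s

theorem CubeDegLT.pow_two_pow {n d : ℕ} {f : (Fin n → Bool) → ℝ} (hf : CubeDegLT n d f)
    (j : ℕ) : CubeDegLT n (d * 2 ^ j) (f ^ 2 ^ j) := by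
  induction j with
  | zero => simpa using hf
  | succ j ih =>
    rw [pow_succ 2 j, pow_mul, sq, show d * (2 ^ j * 2) = d * 2 ^ j + d * 2 ^ j by ring]
    exact ih.mul ih

theorem CubeDegLT.const {n : ℕ} (c : ℝ) : CubeDegLT n 1 (fun _ => c) := by
  induction n with
  | zero => simp [CubeDegLT]
  | succ n ih => exact ⟨fun _ => c, 0, by simp, ih, CubeDegLT.zero⟩

/-- Bonami's lemma: comparison of the second and fourth moments of a polynomial of bounded
degree on the discrete cube. -/
theorem CubeDegLT.cubeAvg_pow_four_le {n d : ℕ} {f : (Fin n → Bool) → ℝ}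
    (hf : CubeDegLT n d f) :
    cubeAvg (fun z => f z ^ 4) ≤ 9 ^ d * cubeAvg (fun z => f z ^ 2) ^ 2 := by
  induction n generalizing d with
  | zero =>
    have h : (1 : ℝ) ≤ 9 ^ d := one_le_pow₀ (by norm_num)
    simp only [cubeAvg, Fintype.sum_unique, pow_zero, div_one, ← pow_mul]
    norm_num
    exact le_mul_of_one_le_left (by positivity) h
  | succ n ih =>
    rcases d with _ | d
    · have : f = 0 := by simpa [CubeDegLT] using hf
      simp [this, cubeAvg_const]
    obtain ⟨g, h, hfgh, hg, hh⟩ := hf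
    rw [cubeAvg_add_sign_mul_pow_four hfgh, cubeAvg_add_sign_mul_sq hfgh]
    have ihg := ih hg
    have ihh := ih hh
    have hcs := cubeAvg_mul_sq_le (fun z => g z ^ 2) (fun z => h z ^ 2)
    simp only [← pow_mul] at hcs
    norm_num at hcs
    have ha : 0 ≤ cubeAvg (fun z => g z ^ 2) := cubeAvg_nonneg fun z => by positivity
    have hb : 0 ≤ cubeAvg (fun z => h z ^ 2) := cubeAvg_nonneg fun z => by positivity
    have hh4 : 0 ≤ cubeAvg (fun z => h z ^ 4) := cubeAvg_nonneg fun z => by positivity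
    set a := cubeAvg (fun z => g z ^ 2)
    set b := cubeAvg (fun z => h z ^ 2)
    set m := cubeAvg (fun z => g z ^ 2 * h z ^ 2)
    have hD : (0 : ℝ) < 9 ^ d := by positivity
    rw [pow_succ] at ihg ⊢
    set D : ℝ := 9 ^ d
    have hm : m ≤ 3 * D * a * b := by
      apply le_of_sq_le_sq _ (by positivity)
      calc m ^ 2 ≤ _ := hcs
        _ ≤ (D * 9 * a ^ 2) * (D * b ^ 2) := mul_le_mul ihg ihh hh4 (by positivity)
        _ = _ := by ring
    nlinarith [mul_nonneg hD.le (sq_nonneg b)]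

theorem CubeDegLT.cubeAvg_pow_two_pow_le {n d : ℕ} {f : (Fin n → Bool) → ℝ}
    (hf : CubeDegLT n d f) (j : ℕ) :
    cubeAvg (fun z => f z ^ 2 ^ (j + 1)) ≤
      (3 ^ d) ^ (j * 2 ^ j) * cubeAvg (fun z => f z ^ 2) ^ 2 ^ j := by
  induction j with
  | zero => simp
  | succ j ih =>
    have h := (hf.pow_two_pow j).cubeAvg_pow_four_le
    simp only [Pi.pow_apply, ← pow_mul] at h
    rw [show 2 ^ j * 4 = 2 ^ (j + 1 + 1) by ring, show 2 ^ j * 2 = 2 ^ (j + 1) by ring] at h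
    have h0 : 0 ≤ cubeAvg (fun z => f z ^ 2 ^ (j + 1)) := cubeAvg_nonneg fun z => by
      rw [pow_succ, pow_mul]
      positivity
    calc _ ≤ _ := h
      _ ≤ 9 ^ (d * 2 ^ j) *
          ((3 ^ d) ^ (j * 2 ^ j) * cubeAvg (fun z => f z ^ 2) ^ 2 ^ j) ^ 2 := by gcongr
      _ = _ := by
        rw [show (9 : ℝ) = 3 ^ 2 by norm_num, ← pow_mul 3 2]
        ring

/-- The linear form with coefficients `a` in the signs. -/
def signLinear {n : ℕ} (a : Fin n → ℝ) (z : Fin n → Bool) : ℝ := ∑ i, a i * boolSign (z i)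

theorem signLinear_cons {n : ℕ} (a : Fin (n + 1) → ℝ) (b : Bool) (z : Fin n → Bool) :
    signLinear a (Fin.cons b z) = signLinear (fun i => a i.succ) z + boolSign b * a 0 := by
  simp only [signLinear, Fin.sum_univ_succ, Fin.cons_zero, Fin.cons_succ]
  ring

theorem cubeDegLT_signLinear {n : ℕ} (a : Fin n → ℝ) : CubeDegLT n 2 (signLinear a) := by
  induction n with
  | zero => simp [CubeDegLT]
  | succ n ih => exact ⟨_, _, signLinear_cons a, ih _, CubeDegLT.const _⟩

theorem cubeAvg_signLinear_sq {n : ℕ} (a : Fin n → ℝ) :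
    cubeAvg (fun z => signLinear a z ^ 2) = ∑ i, a i ^ 2 := by
  induction n with
  | zero => simp [cubeAvg, signLinear]
  | succ n ih =>
    rw [cubeAvg_add_sign_mul_sq (signLinear_cons a), ih, cubeAvg_const, Fin.sum_univ_succ]
    ring

/-- The centered quadratic form in the signs with coefficient matrix `A`. -/
def signChaos {n : ℕ} (A : Fin n → Fin n → ℝ) (z : Fin n → Bool) : ℝ :=
  (∑ i, ∑ j, A i j * (boolSign (z i) * boolSign (z j))) - ∑ i, A i i

theorem signChaos_cons {n : ℕ} (A : Fin (n + 1) → Fin (n + 1) → ℝ) (b : Bool)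
    (z : Fin n → Bool) :
    signChaos A (Fin.cons b z) = signChaos (fun i j => A i.succ j.succ) z +
      boolSign b * signLinear (fun i => A 0 i.succ + A i.succ 0) z := by
  simp only [signChaos, signLinear, Fin.sum_univ_succ, Fin.cons_zero, Fin.cons_succ,
    Finset.sum_add_distrib, Finset.mul_sum, add_mul, mul_add, boolSign_mul_self]
  have h1 (i : Fin n) : A i.succ 0 * (boolSign (z i) * boolSign b) =
      boolSign b * (A i.succ 0 * boolSign (z i)) := by ring
  have h2 (i : Fin n) : A 0 i.succ * (boolSign b * boolSign (z i)) =
      boolSign b * (A 0 i.succ * boolSign (z i)) := by ring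
  simp only [h1, h2]
  ring

theorem cubeDegLT_signChaos {n : ℕ} (A : Fin n → Fin n → ℝ) :
    CubeDegLT n 3 (signChaos A) := by
  induction n with
  | zero => simp [CubeDegLT]
  | succ n ih => exact ⟨_, _, signChaos_cons A, ih _, cubeDegLT_signLinear _⟩

theorem cubeAvg_signChaos_sq_le {n : ℕ} (A : Fin n → Fin n → ℝ) :
    cubeAvg (fun z => signChaos A z ^ 2) ≤ 2 * ∑ i, ∑ j, A i j ^ 2 := by
  induction n with
  | zero => simp [cubeAvg, signChaos]
  | succ n ih =>
    rw [cubeAvg_add_sign_mul_sq (signChaos_cons A), cubeAvg_signLinear_sq]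
    have h : ∑ i : Fin n, (A 0 i.succ + A i.succ 0) ^ 2 ≤
        2 * ∑ i : Fin n, A 0 i.succ ^ 2 + 2 * ∑ i : Fin n, A i.succ 0 ^ 2 := by
      rw [Finset.mul_sum, Finset.mul_sum, ← Finset.sum_add_distrib]
      exact Finset.sum_le_sum fun i _ => by nlinarith [sq_nonneg (A 0 i.succ - A i.succ 0)]
    have := ih (fun i j => A i.succ j.succ)
    simp only [Fin.sum_univ_succ, Finset.sum_add_distrib]
    nlinarith [sq_nonneg (A 0 0)]

/-- Moment bound for the quadratic form of an orthogonal projection in random signs. -/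
theorem cubeAvg_projection_le {N : ℕ} {n : ℝ} {P : Matrix (Fin N) (Fin N) ℝ} (hsymm : Pᵀ = P)
    (hidem : P * P = P) (htr : P.trace = n) (j : ℕ) :
    cubeAvg (fun z : Fin N → Bool => ((fun i => boolSign (z i)) ⬝ᵥ
      P *ᵥ (fun i => boolSign (z i)) - n) ^ 2 ^ (j + 1)) ≤ (27 ^ j * (2 * n)) ^ 2 ^ j := by
  have hfrob : ∑ i, ∑ j, P i j ^ 2 = n := by
    rw [← htr, ← hidem, Matrix.trace]
    refine Finset.sum_congr rfl fun i _ => ?_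
    rw [hidem]
    nth_rewrite 2 [← hidem]
    rw [Matrix.diag_apply, Matrix.mul_apply]
    refine Finset.sum_congr rfl fun j _ => ?_
    rw [sq]
    congr 1
    conv_lhs => rw [← hsymm]
    rfl
  have hch (z : Fin N → Bool) : (fun i => boolSign (z i)) ⬝ᵥ
      P *ᵥ (fun i => boolSign (z i)) - n = signChaos P z := by
    simp only [signChaos, ← htr, Matrix.trace, Matrix.diag_apply, dotProduct, Matrix.mulVec,
      Finset.mul_sum]
    congr 1
    exact Finset.sum_congr rfl fun i _ => Finset.sum_congr rfl fun j _ => by ring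
  simp only [hch]
  have h2 := cubeAvg_signChaos_sq_le P
  rw [hfrob] at h2
  have h0 : 0 ≤ cubeAvg (fun z => signChaos P z ^ 2) := cubeAvg_nonneg fun z => by positivity
  calc _ ≤ _ := (cubeDegLT_signChaos P).cubeAvg_pow_two_pow_le j
    _ ≤ (3 ^ 3) ^ (j * 2 ^ j) * (2 * n) ^ 2 ^ j := by gcongr
    _ = _ := by rw [pow_mul, ← mul_pow]; norm_num

/-- Two vectors of the same length are related by an orthogonal matrix. -/
theorem exists_orthogonal_mulVec_eq {ι : Type*} [Fintype ι] [DecidableEq ι] {u v : ι → ℝ}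
    (h : u ⬝ᵥ u = v ⬝ᵥ v) : ∃ R : Matrix ι ι ℝ, Rᵀ * R = 1 ∧ R *ᵥ u = v := by
  by_cases huv : u = v
  · exact ⟨1, by simp, by simp [huv]⟩
  set w := u - v with hw
  have hw0 : w ⬝ᵥ w ≠ 0 := fun h0 => huv (sub_eq_zero.1 (dotProduct_self_eq_zero.1 h0))
  have hwu : w ⬝ᵥ w = 2 * (w ⬝ᵥ u) := by
    simp only [hw, sub_dotProduct, dotProduct_sub, dotProduct_comm v u]
    linarith
  refine ⟨1 - (2 / (w ⬝ᵥ w)) • Matrix.vecMulVec w w, ?_, ?_⟩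
  · have hsq : Matrix.vecMulVec w w * Matrix.vecMulVec w w =
        (w ⬝ᵥ w) • Matrix.vecMulVec w w := by
      rw [Matrix.vecMulVec_mul_vecMulVec]
      ext i j
      simp [Matrix.vecMulVec_apply]
      ring
    have ht : (Matrix.vecMulVec w w)ᵀ = Matrix.vecMulVec w w := by
      rw [Matrix.transpose_vecMulVec]
    have hc : 2 / (w ⬝ᵥ w) * (2 / (w ⬝ᵥ w) * (w ⬝ᵥ w)) = 2 / (w ⬝ᵥ w) + 2 / (w ⬝ᵥ w) := by
      field_simp
      norm_num
    simp only [Matrix.transpose_sub, Matrix.transpose_smul, ht, Matrix.transpose_one,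
      Matrix.sub_mul, Matrix.mul_sub, Matrix.one_mul, Matrix.mul_one, Matrix.smul_mul,
      Matrix.mul_smul, hsq, smul_sub, smul_smul, hc, add_smul]
    abel
  · rw [Matrix.sub_mulVec, Matrix.one_mulVec, Matrix.smul_mulVec, Matrix.vecMulVec_mulVec]
    ext i
    have hi : w i = u i - v i := rfl
    have hwu0 : w ⬝ᵥ u ≠ 0 := fun h0 => hw0 (by rw [hwu, h0, mul_zero])
    simp only [Pi.sub_apply, Pi.smul_apply, smul_eq_mul, hwu, MulOpposite.smul_eq_mul_unop,
      MulOpposite.unop_op]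
    field_simp
    rw [hi]
    ring

theorem measurable_quadForm {N : ℕ} (v : Fin N → ℝ) :
    Measurable fun P : Fin N → Fin N → ℝ => v ⬝ᵥ Matrix.of P *ᵥ v := by
  simp only [dotProduct, Matrix.mulVec, Matrix.of_apply]
  fun_prop

theorem measurable_conj {N : ℕ} (R : Matrix (Fin N) (Fin N) ℝ) :
    Measurable fun (P : Fin N → Fin N → ℝ) i j => (Rᵀ * Matrix.of P * R) i j := by
  simp only [Matrix.mul_apply, Matrix.of_apply]
  fun_prop

/-- If the law of `P` is invariant under orthogonal conjugation, then the law of the quadratic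
form of `P` at a vector depends only on the length of the vector. -/
theorem lintegral_quadForm_eq {N : ℕ} {μP : Measure (Fin N → Fin N → ℝ)}
    (hinv : ∀ R : Matrix (Fin N) (Fin N) ℝ, Rᵀ * R = 1 →
      Measure.map (fun P => fun i j => (Rᵀ * Matrix.of P * R) i j) μP = μP)
    {u v : Fin N → ℝ} (huv : u ⬝ᵥ u = v ⬝ᵥ v) {F : ℝ → ENNReal} (hF : Measurable F) :
    ∫⁻ P, F (u ⬝ᵥ Matrix.of P *ᵥ u) ∂μP = ∫⁻ P, F (v ⬝ᵥ Matrix.of P *ᵥ v) ∂μP := by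
  obtain ⟨R, hR, rfl⟩ := exists_orthogonal_mulVec_eq huv
  have hmap := lintegral_map (μ := μP) (hF.comp (measurable_quadForm u)) (measurable_conj R)
  rw [hinv R hR] at hmap
  refine hmap.trans ?_
  refine lintegral_congr fun P => congrArg F ?_
  change u ⬝ᵥ (Rᵀ * Matrix.of P * R) *ᵥ u = _
  rw [Matrix.mul_assoc, ← Matrix.mulVec_mulVec, Matrix.dotProduct_mulVec,
    Matrix.vecMul_transpose, Matrix.mulVec_mulVec]

theorem lintegral_quadForm_pow_le {N n : ℕ} (hN : 1 ≤ N) {μP : Measure (Fin N → Fin N → ℝ)}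
    [IsProbabilityMeasure μP]
    (hproj : ∀ᵐ P ∂μP, (Matrix.of P)ᵀ = Matrix.of P ∧ Matrix.of P * Matrix.of P = Matrix.of P ∧
      (Matrix.of P).trace = (n : ℝ))
    (hinv : ∀ R : Matrix (Fin N) (Fin N) ℝ, Rᵀ * R = 1 →
      Measure.map (fun P => fun i j => (Rᵀ * Matrix.of P * R) i j) μP = μP)
    (v : Fin N → ℝ) (j : ℕ) :
    ∫⁻ P, ENNReal.ofReal ((v ⬝ᵥ Matrix.of P *ᵥ v - v ⬝ᵥ v * n / N) ^ 2 ^ (j + 1)) ∂μP ≤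
      ENNReal.ofReal (((v ⬝ᵥ v / N) ^ 2 * (27 ^ j * (2 * n))) ^ 2 ^ j) := by
  have hN0 : (0 : ℝ) < N := by exact_mod_cast hN
  have hv : 0 ≤ v ⬝ᵥ v := (Finset.sum_nonneg fun i _ => mul_self_nonneg (v i))
  set s := v ⬝ᵥ v / N with hs
  have hs0 : 0 ≤ s := by positivity
  have hsN : v ⬝ᵥ v = s * N := by rw [hs]; field_simp
  let e (z : Fin N → Bool) : Fin N → ℝ := fun i => boolSign (z i)
  let G (z : Fin N → Bool) (P : Fin N → Fin N → ℝ) : ℝ :=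
    s ^ 2 ^ (j + 1) * (e z ⬝ᵥ Matrix.of P *ᵥ e z - n) ^ 2 ^ (j + 1)
  have hGm (z) : Measurable fun P => ENNReal.ofReal (G z P) :=
    ((((measurable_quadForm (e z)).sub_const _).pow_const _).const_mul _).ennreal_ofReal
  have hG0 (z P) : 0 ≤ G z P := by
    simp only [G, pow_succ 2 j, pow_mul _ (2 ^ j) 2]
    positivity
  have hz (z : Fin N → Bool) :
      ∫⁻ P, ENNReal.ofReal ((v ⬝ᵥ Matrix.of P *ᵥ v - v ⬝ᵥ v * n / N) ^ 2 ^ (j + 1)) ∂μP =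
        ∫⁻ P, ENNReal.ofReal (G z P) ∂μP := by
    have hlen : v ⬝ᵥ v = (√s • e z) ⬝ᵥ (√s • e z) := by
      have : e z ⬝ᵥ e z = N := by simp [e, dotProduct, boolSign_mul_self]
      rw [smul_dotProduct, dotProduct_smul, this, smul_smul, Real.mul_self_sqrt hs0, smul_eq_mul,
        hsN]
    rw [lintegral_quadForm_eq hinv hlen
      (F := fun t => ENNReal.ofReal ((t - v ⬝ᵥ v * n / N) ^ 2 ^ (j + 1))) (by fun_prop)]
    refine lintegral_congr fun P => congrArg ENNReal.ofReal ?_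
    rw [Matrix.mulVec_smul, smul_dotProduct, dotProduct_smul, smul_smul, Real.mul_self_sqrt hs0,
      smul_eq_mul, hsN]
    simp only [G]
    rw [← mul_pow]
    congr 1
    field_simp
  have hsum : (2 : ENNReal) ^ N *
      ∫⁻ P, ENNReal.ofReal ((v ⬝ᵥ Matrix.of P *ᵥ v - v ⬝ᵥ v * n / N) ^ 2 ^ (j + 1)) ∂μP =
        ∫⁻ P, ∑ z, ENNReal.ofReal (G z P) ∂μP := by
    rw [lintegral_finsetSum _ fun z _ => hGm z, ← Finset.sum_congr rfl fun z _ => hz z]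
    simp
  have hbound : ∫⁻ P, ∑ z, ENNReal.ofReal (G z P) ∂μP ≤
      ∫⁻ _, 2 ^ N * ENNReal.ofReal ((s ^ 2 * (27 ^ j * (2 * n))) ^ 2 ^ j) ∂μP := by
    refine lintegral_mono_ae ?_
    filter_upwards [hproj] with P ⟨h1, h2, h3⟩
    have h := cubeAvg_projection_le h1 h2 h3 j
    rw [cubeAvg, div_le_iff₀ (by positivity)] at h
    rw [← ENNReal.ofReal_sum_of_nonneg fun z _ => hG0 z P,
      show (2 : ENNReal) ^ N = ENNReal.ofReal (2 ^ N) by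
        rw [ENNReal.ofReal_pow (by norm_num)]; norm_num,
      ← ENNReal.ofReal_mul (by positivity)]
    refine ENNReal.ofReal_le_ofReal ?_
    rw [← Finset.mul_sum, mul_pow _ _ (2 ^ j), ← pow_mul s, ← pow_succ' 2 j]
    calc _ ≤ s ^ 2 ^ (j + 1) * ((27 ^ j * (2 * (n : ℝ))) ^ 2 ^ j * 2 ^ N) := by gcongr
      _ = _ := by ring
  rw [← hsum, lintegral_const, measure_univ, mul_one] at hbound
  exact (ENNReal.mul_le_mul_iff_right (by simp) (by simp)).1 hbound

theorem exists_pow_mul_two_le {k L : ℝ} (hk : 0 < k) (hL : 64 * Real.exp k ≤ L) :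
    ∃ j : ℕ, (27 ^ j * 2) ^ 2 ^ j ≤ Real.exp (-k * L) * (L ^ 6) ^ 2 ^ j := by
  have hL1 : 1 ≤ L := by linarith [Real.one_le_exp hk.le]
  obtain ⟨i, hi, hi'⟩ := exists_nat_pow_near hL1 (one_lt_two (α := ℝ))
  refine ⟨i + 1, ?_⟩
  have h1 : (27 : ℝ) ^ (i + 1) * 2 ≤ Real.exp (-k) * L ^ 6 := by
    calc (27 : ℝ) ^ (i + 1) * 2 ≤ 32 ^ (i + 1) * 2 := by gcongr; norm_num
      _ = 64 * (2 ^ i) ^ 5 := by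
        rw [← pow_mul, mul_comm i, pow_mul, pow_succ]; norm_num; ring
      _ ≤ 64 * L ^ 5 := by gcongr
      _ = Real.exp (-k) * (64 * Real.exp k) * L ^ 5 := by
        rw [Real.exp_neg]; field_simp
      _ ≤ Real.exp (-k) * L * L ^ 5 := by gcongr
      _ = _ := by ring
  calc _ ≤ (Real.exp (-k) * L ^ 6) ^ 2 ^ (i + 1) := by gcongr
    _ = Real.exp (-k * 2 ^ (i + 1)) * (L ^ 6) ^ 2 ^ (i + 1) := by
      rw [mul_pow, ← Real.exp_nat_mul]
      push_cast
      ring_nf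
    _ ≤ _ := by
      have : -k * 2 ^ (i + 1) ≤ -k * L := by nlinarith
      gcongr

/-- Concentration of the quadratic form of a random projection at a single vector. -/
theorem measure_quadForm_deviation_le {N n : ℕ} (hN : 1 ≤ N) (hn : 1 ≤ n) {k : ℝ} (hk : 0 < k)
    (hlog : 64 * Real.exp k ≤ Real.log N) {μP : Measure (Fin N → Fin N → ℝ)}
    [IsProbabilityMeasure μP]
    (hproj : ∀ᵐ P ∂μP, (Matrix.of P)ᵀ = Matrix.of P ∧ Matrix.of P * Matrix.of P = Matrix.of P ∧
      (Matrix.of P).trace = (n : ℝ))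
    (hinv : ∀ R : Matrix (Fin N) (Fin N) ℝ, Rᵀ * R = 1 →
      Measure.map (fun P => fun i j => (Rᵀ * Matrix.of P * R) i j) μP = μP)
    (v : Fin N → ℝ) :
    μP {P | v ⬝ᵥ v * Real.log N ^ 3 * √n / N < |v ⬝ᵥ Matrix.of P *ᵥ v - v ⬝ᵥ v * n / N|} ≤
      ENNReal.ofReal ((N : ℝ) ^ (-k)) := by
  have hN0 : (0 : ℝ) < N := by exact_mod_cast hN
  have hn0 : (0 : ℝ) < n := by exact_mod_cast hn
  have hL0 : 0 < Real.log N := lt_of_lt_of_le (by positivity) hlog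
  rcases eq_or_ne v 0 with rfl | hv
  · simp
  have hvv : 0 < v ⬝ᵥ v := lt_of_le_of_ne ((Finset.sum_nonneg fun i _ => mul_self_nonneg (v i)))
    fun h => hv (dotProduct_self_eq_zero.1 h.symm)
  obtain ⟨j, hj⟩ := exists_pow_mul_two_le hk hlog
  set L := Real.log N with hL
  set t := v ⬝ᵥ v * L ^ 3 * √n / N with ht
  have ht0 : 0 < t := by positivity
  have hδ : (N : ℝ) ^ (-k) = Real.exp (-k * L) := by
    rw [Real.rpow_def_of_pos hN0, mul_comm]
  have hmarkov : ENNReal.ofReal (t ^ 2 ^ (j + 1)) *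
      μP {P | t < |v ⬝ᵥ Matrix.of P *ᵥ v - v ⬝ᵥ v * n / N|} ≤
        ENNReal.ofReal (((v ⬝ᵥ v / N) ^ 2 * (27 ^ j * (2 * n))) ^ 2 ^ j) := by
    refine le_trans ?_ (lintegral_quadForm_pow_le hN hproj hinv v j)
    refine le_trans ?_ (mul_meas_ge_le_lintegral
      (((measurable_quadForm v).sub_const _).pow_const _).ennreal_ofReal
        (ENNReal.ofReal (t ^ 2 ^ (j + 1))))
    refine mul_le_mul_right (measure_mono fun P (hP : t < _) => ENNReal.ofReal_le_ofReal ?_) _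
    rw [← (show Even (2 ^ (j + 1)) from (even_two.pow_of_ne_zero (by omega))).pow_abs
      (v ⬝ᵥ Matrix.of P *ᵥ v - v ⬝ᵥ v * n / N)]
    gcongr
  have hle : ((v ⬝ᵥ v / N) ^ 2 * (27 ^ j * (2 * n))) ^ 2 ^ j ≤
      t ^ 2 ^ (j + 1) * Real.exp (-k * L) := by
    have ht2 : t ^ 2 = (v ⬝ᵥ v / N) ^ 2 * n * L ^ 6 := by
      rw [ht, div_pow, mul_pow, mul_pow, Real.sq_sqrt hn0.le]
      ring
    calc _ = ((v ⬝ᵥ v / N) ^ 2 * n) ^ 2 ^ j * (27 ^ j * 2) ^ 2 ^ j := by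
          rw [← mul_pow]; ring
      _ ≤ ((v ⬝ᵥ v / N) ^ 2 * n) ^ 2 ^ j * (Real.exp (-k * L) * (L ^ 6) ^ 2 ^ j) := by gcongr
      _ = (t ^ 2) ^ 2 ^ j * Real.exp (-k * L) := by rw [ht2, mul_pow _ (L ^ 6)]; ring
      _ = _ := by rw [← pow_mul, ← pow_succ']
  rw [hδ]
  have hT : 0 < t ^ 2 ^ (j + 1) := by positivity
  refine (ENNReal.mul_le_mul_iff_right (by simpa using hT) ENNReal.ofReal_ne_top).1
    (hmarkov.trans ?_)
  rw [← ENNReal.ofReal_mul hT.le]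
  exact ENNReal.ofReal_le_ofReal hle

/-- A bilinear form is controlled by the quadratic form at two vectors, by polarization. -/
theorem abs_bilinForm_sub_le {N : ℕ} {P : Matrix (Fin N) (Fin N) ℝ} (hP : Pᵀ = P)
    {x y : Fin N → ℝ} {p q c d : ℝ} (hp : 0 < p) (hq : 0 < q) (hx : x ⬝ᵥ x = p ^ 2)
    (hy : y ⬝ᵥ y = q ^ 2)
    (hadd : |(q • x + p • y) ⬝ᵥ P *ᵥ (q • x + p • y) -
      (q • x + p • y) ⬝ᵥ (q • x + p • y) * c| ≤ (q • x + p • y) ⬝ᵥ (q • x + p • y) * d)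
    (hsub : |(q • x - p • y) ⬝ᵥ P *ᵥ (q • x - p • y) -
      (q • x - p • y) ⬝ᵥ (q • x - p • y) * c| ≤ (q • x - p • y) ⬝ᵥ (q • x - p • y) * d) :
    |x ⬝ᵥ P *ᵥ y - x ⬝ᵥ y * c| ≤ p * q * d := by
  have hsymm : y ⬝ᵥ P *ᵥ x = x ⬝ᵥ P *ᵥ y := by
    rw [Matrix.dotProduct_mulVec, ← Matrix.mulVec_transpose, hP, dotProduct_comm]
  simp only [Matrix.mulVec_add, Matrix.mulVec_sub, Matrix.mulVec_smul, add_dotProduct,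
    dotProduct_add, sub_dotProduct, dotProduct_sub, smul_dotProduct, dotProduct_smul, smul_eq_mul,
    hsymm, dotProduct_comm y x, hx, hy] at hadd hsub
  rw [abs_le] at hadd hsub ⊢
  have hpq : 0 < 4 * (p * q) := by positivity
  constructor
  · refine le_of_mul_le_mul_left ?_ hpq
    linarith [hadd.1, hsub.2]
  · refine le_of_mul_le_mul_left ?_ hpq
    linarith [hadd.2, hsub.1]

theorem dotProduct_self_eq_eucNorm_sq {N : ℕ} (v : Fin N → ℝ) : v ⬝ᵥ v = eucNorm v ^ 2 := by
  rw [eucNorm, Real.sq_sqrt (Finset.sum_nonneg fun i _ => sq_nonneg _)]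
  simp [dotProduct, sq]

theorem eucNorm_pos {N : ℕ} {v : Fin N → ℝ} (hv : v ≠ 0) : 0 < eucNorm v := by
  refine lt_of_le_of_ne (Real.sqrt_nonneg _) fun h => hv ?_
  rw [← dotProduct_self_eq_zero, dotProduct_self_eq_eucNorm_sq, ← h]
  simp

/-- quadratic forms of a random projection: fix `x, y ∈ ℝ^N` with
`α = ⟨x, y⟩`, and let `P` be the orthogonal projection onto a uniformly random
`n`-dimensional subspace of `ℝ^N` — formalized as any probability measure on matrices
supported on symmetric idempotents of trace `n` and invariant under conjugation by every
orthogonal matrix (this characterizes the uniform Grassmannian distribution). There is a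
universal constant `C > 0` such that for every `k > 0` there is `N₀` with: for all
`N ≥ N₀`, with probability at least `1 - N^{-k}`,
`|xᵀPy - α n/N| ≤ ‖x‖ ‖y‖ (log N)^C √n / N`. -/
theorem stmt_16 :
    ∃ C : ℝ, 0 < C ∧
      ∀ k : ℝ, 0 < k → ∃ N₀ : ℕ, ∀ N n : ℕ, N₀ ≤ N → 1 ≤ n → n ≤ N →
        ∀ x y : Fin N → ℝ,
        ∀ (μP : Measure (Fin N → Fin N → ℝ)) [IsProbabilityMeasure μP],
          (∀ᵐ P ∂μP, (Matrix.of P)ᵀ = Matrix.of P ∧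
            Matrix.of P * Matrix.of P = Matrix.of P ∧
            (Matrix.of P).trace = (n : ℝ)) →
          (∀ R : Matrix (Fin N) (Fin N) ℝ, Rᵀ * R = 1 →
            Measure.map (fun P => fun i j => (Rᵀ * Matrix.of P * R) i j) μP = μP) →
          ENNReal.ofReal (1 - (N : ℝ) ^ (-k)) ≤
            μP {P | |(∑ i, x i * (Matrix.of P).mulVec y i)
                  - (∑ i, x i * y i) * n / N|
                ≤ eucNorm x * eucNorm y * (Real.log N) ^ C * Real.sqrt n / N} := by
  refine ⟨3, by norm_num, fun k hk => ⟨max 2 ⌈Real.exp (64 * Real.exp (k + 1))⌉₊, ?_⟩⟩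
  intro N n hN₀ hn hnN x y μP _ hproj hinv
  obtain ⟨hN2, hN₀⟩ := max_le_iff.1 hN₀
  have hN2' : (2 : ℝ) ≤ N := by exact_mod_cast hN2
  have hN0 : (0 : ℝ) < N := by linarith
  have hlog : 64 * Real.exp (k + 1) ≤ Real.log N :=
    (Real.le_log_iff_exp_le hN0).2 (Nat.ceil_le.1 hN₀)
  have hdev := measure_quadForm_deviation_le (by omega) hn (by linarith) hlog hproj hinv
  have hδ : (N : ℝ) ^ (-(k + 1)) + (N : ℝ) ^ (-(k + 1)) ≤ (N : ℝ) ^ (-k) := by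
    rw [show -k = -(k + 1) + 1 by ring, Real.rpow_add_one hN0.ne']
    nlinarith [Real.rpow_pos_of_pos hN0 (-(k + 1))]
  have hδ0 : 0 ≤ (N : ℝ) ^ (-(k + 1)) := by positivity
  change _ ≤ μP {P | |x ⬝ᵥ Matrix.of P *ᵥ y - x ⬝ᵥ y * n / N| ≤
    eucNorm x * eucNorm y * Real.log N ^ (3 : ℝ) * √n / N}
  rw [show Real.log N ^ (3 : ℝ) = Real.log N ^ 3 from Real.rpow_ofNat _ 3]
  set S := {P : Fin N → Fin N → ℝ | |x ⬝ᵥ Matrix.of P *ᵥ y - x ⬝ᵥ y * n / N| ≤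
    eucNorm x * eucNorm y * Real.log N ^ 3 * √n / N} with hS
  rcases eq_or_ne x 0 with rfl | hx
  · simp [hS, eucNorm, Real.rpow_nonneg]
  rcases eq_or_ne y 0 with rfl | hy
  · simp [hS, eucNorm, Real.rpow_nonneg]
  let B (v : Fin N → ℝ) := {P : Fin N → Fin N → ℝ | v ⬝ᵥ v * Real.log N ^ 3 * √n / N <
    |v ⬝ᵥ Matrix.of P *ᵥ v - v ⬝ᵥ v * n / N|}
  let a := eucNorm y • x + eucNorm x • y
  let b := eucNorm y • x - eucNorm x • y
  have hcover : (Set.univ : Set (Fin N → Fin N → ℝ)) ≤ᵐ[μP] (S ∪ (B a ∪ B b) : Set _) := by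
    filter_upwards [hproj] with P hP _
    by_cases ha : P ∈ B a
    · exact Or.inr (Or.inl ha)
    by_cases hb : P ∈ B b
    · exact Or.inr (Or.inr hb)
    refine Or.inl ?_
    simp only [B, Set.mem_ofPred_eq, not_lt, mul_div_assoc, mul_assoc] at ha hb
    have := abs_bilinForm_sub_le hP.1 (eucNorm_pos hx) (eucNorm_pos hy)
      (dotProduct_self_eq_eucNorm_sq x) (dotProduct_self_eq_eucNorm_sq y) ha hb
    simpa only [hS, Set.mem_ofPred_eq, mul_div_assoc, mul_assoc] using this
  rw [ENNReal.ofReal_sub _ (by positivity), ENNReal.ofReal_one, tsub_le_iff_right]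
  calc (1 : ENNReal) = μP Set.univ := measure_univ.symm
    _ ≤ μP (S ∪ (B a ∪ B b)) := measure_mono_ae hcover
    _ ≤ μP S + (μP (B a) + μP (B b)) :=
      (measure_union_le _ _).trans (add_le_add_right (measure_union_le _ _) _)
    _ ≤ μP S + (ENNReal.ofReal ((N : ℝ) ^ (-(k + 1))) + ENNReal.ofReal ((N : ℝ) ^ (-(k + 1)))) :=
      by gcongr <;> exact hdev _
    _ ≤ _ := by
      rw [← ENNReal.ofReal_add hδ0 hδ0]
      gcongr
end
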